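/- arXiv:math/0304462 — 2 statements merged into one kernel-verified Lean document; each statement's English description precedes it below -/
import Mathlib

section
/- For every rational polytope K ⊂ R^d defined by m integral inequalities of total size φ, the number of vertices of the integer convex hull I(K) = conv(Z^d ∩ K) satisfies f_0(I(K)) ≤ 2 m^d (12 d^2 φ)^{d-1}. -/
open MeasureTheory Set Filter
noncomputable section

/-- Euclidean space `ℝ^d`. -/
abbrev E (d : ℕ) := EuclideanSpace ℝ (Fin d)

/-- The integer lattice `ℤ^d` viewed inside `ℝ^d`. -/
def intPoints (d : ℕ) : Set (E d) := {v | ∀ i, ∃ z : ℤ, v i = z}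

/-- The integer convex hull `I(K) = conv(ℤ^d ∩ K)`. -/
def integerHull (d : ℕ) (K : Set (E d)) : Set (E d) := convexHull ℝ (intPoints d ∩ K)

/-- `f₀(P)`: the number of vertices (extreme points) of `P`. -/
def numVertices (d : ℕ) (P : Set (E d)) : ℕ := (Set.extremePoints ℝ P).ncard

/-- The number of bits needed to encode an integer coefficient. -/
def bitSize (z : ℤ) : ℕ := Nat.size z.natAbs + 1

/-- The size of the system of `m` integral inequalities `⟨a j, x⟩ ≤ b j`. -/
def systemSize (d m : ℕ) (a : Fin m → Fin d → ℤ) (b : Fin m → ℤ) : ℕ :=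
  ∑ j, ((∑ i, bitSize (a j i)) + bitSize (b j))

/-!
Adding `1` to every slack of the system `⟨a j, x⟩ ≤ b j` gives affine functions `w j` that are at
least `1` on `K`, while an integer point where all of them are positive still lies in `K`. So if
`x ≠ p` are vertices of `I(K)`, some `w j` is nonpositive at the integer point `2x - p`, since
otherwise `x` would be the midpoint of `p` and `2x - p` in `I(K)`.

At each vertex `x` choose `d` of the `w j` of maximal determinant after scaling each of them to
take the value `1` at `x`. They form coordinates that control the relative variation of all other
`w j` near `x`. By Cramer's rule `1 ≤ w j ≤ 2 ^ φ` on `K`, so the logarithms of the `d - 1` ratios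
of these coordinates fall into `O(dφ) ^ (d - 1)` cells of mesh `1 / (10 (d - 1))`. Vertices sharing
both their coordinates and their cell lie almost on one ray. If `x` lies between `p` and `q` on that
ray, the reflection property prevents `x` from being much nearer to one of `p`, `q` than to the
other; this fails for four points on a line, so each cell has at most three vertices.
-/

section Determinants

variable {n R : Type*} [Fintype n] [DecidableEq n] [CommRing R]

theorem abs_det_le_prod_sum_abs [LinearOrder R] [IsStrictOrderedRing R] (M : Matrix n n R) :
    |M.det| ≤ ∏ k, ∑ i, |M k i| := by
  have abs_term (σ : Equiv.Perm n) :
      |Equiv.Perm.sign σ • ∏ i, M.transpose (σ i) i| = ∏ i, |M i (σ i)| := by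
    rw [← Finset.abs_prod]
    rcases Int.units_eq_one_or (Equiv.Perm.sign σ) with h | h <;> simp [h]
  rw [← Matrix.det_transpose, Matrix.det_apply]
  calc |∑ σ : Equiv.Perm n, Equiv.Perm.sign σ • ∏ i, M.transpose (σ i) i|
      ≤ ∑ σ : Equiv.Perm n, ∏ i, |M i (σ i)| := by
        simpa only [abs_term] using Finset.abs_sum_le_sum_abs
          (fun σ : Equiv.Perm n => Equiv.Perm.sign σ • ∏ i, M.transpose (σ i) i) Finset.univ
    _ = ∑ g ∈ Finset.univ.image fun σ : Equiv.Perm n => (σ : n → n), ∏ i, |M i (g i)| :=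
        (Finset.sum_image (f := fun g : n → n => ∏ i, |M i (g i)|)
          (g := fun σ : Equiv.Perm n => (σ : n → n)) Equiv.coe_fn_injective.injOn).symm
    _ ≤ ∑ g : n → n, ∏ i, |M i (g i)| :=
        Finset.sum_le_sum_of_subset_of_nonneg (Finset.subset_univ _)
          fun _ _ _ => Finset.prod_nonneg fun _ _ => abs_nonneg _
    _ = ∏ k, ∑ i, |M k i| := by rw [Finset.prod_univ_sum, Fintype.piFinset_univ]

theorem det_bordered_of_mulVec_eq (M : Matrix n n R) {β x : n → R} (r : n → R) (c : R)
    (h : M.mulVec x = β) :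
    (Matrix.fromBlocks M (Matrix.replicateCol Unit β) (Matrix.replicateRow Unit r)
      (Matrix.of fun _ _ => c)).det = M.det * (c - r ⬝ᵥ x) := by
  have eliminate : Matrix.fromBlocks M (Matrix.replicateCol Unit β) (Matrix.replicateRow Unit r)
      (Matrix.of fun _ _ => c) * Matrix.fromBlocks 1 (Matrix.replicateCol Unit (-x)) 0 1 =
      Matrix.fromBlocks M 0 (Matrix.replicateRow Unit r) (Matrix.of fun _ _ => c - r ⬝ᵥ x) := by
    rw [Matrix.fromBlocks_multiply, ← h]
    congr 1 <;> ext i j <;>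
      simp [Matrix.mul_apply, Matrix.mulVec, dotProduct, sub_eq_neg_add]
  have := congrArg Matrix.det eliminate
  simpa [Matrix.det_mul, Matrix.det_fromBlocks_zero₂₁, Matrix.det_fromBlocks_zero₁₂] using this

end Determinants

section BitSize

theorem abs_add_one_le_two_pow_bitSize (z : ℤ) : |z| + 1 ≤ 2 ^ bitSize z := by
  have h : z.natAbs + 1 ≤ 2 ^ bitSize z :=
    (Nat.lt_size_self z.natAbs).trans_le (Nat.pow_le_pow_right two_pos (Nat.le_succ _))
  rw [Int.abs_eq_natAbs]
  exact_mod_cast h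

theorem sum_abs_add_one_le_two_pow_sum_bitSize {ι : Type*} (s : Finset ι) (z : ι → ℤ) :
    ∑ i ∈ s, |z i| + 1 ≤ 2 ^ ∑ i ∈ s, bitSize (z i) := by
  classical
  induction s using Finset.induction_on with
  | empty => simp
  | insert i s hi ih =>
    rw [Finset.sum_insert hi, Finset.sum_insert hi, pow_add]
    have hs : 0 ≤ ∑ i ∈ s, |z i| := Finset.sum_nonneg fun i _ => abs_nonneg (z i)
    calc |z i| + ∑ i ∈ s, |z i| + 1 ≤ (|z i| + 1) * (∑ i ∈ s, |z i| + 1) := by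
          linarith [mul_nonneg (abs_nonneg (z i)) hs]
      _ ≤ 2 ^ bitSize (z i) * 2 ^ ∑ i ∈ s, bitSize (z i) :=
          mul_le_mul (abs_add_one_le_two_pow_bitSize _) ih (by positivity) (by positivity)

theorem abs_det_add_one_le_two_pow_sum_bitSize {n : Type*} [Fintype n] [DecidableEq n]
    [Nonempty n] (M : Matrix n n ℤ) :
    |M.det| + 1 ≤ 2 ^ ∑ k, ∑ i, bitSize (M k i) := by
  have hrow (k : n) := sum_abs_add_one_le_two_pow_sum_bitSize Finset.univ (M k)
  have hnonneg (k : n) : 0 ≤ ∑ i, |M k i| := Finset.sum_nonneg fun i _ => abs_nonneg (M k i)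
  rw [← Finset.prod_pow_eq_pow_sum]
  calc |M.det| + 1 ≤ ∏ k, ∑ i, |M k i| + ∏ _k : n, 1 := by
        simpa using abs_det_le_prod_sum_abs M
    _ ≤ ∏ k, 2 ^ ∑ i, bitSize (M k i) :=
        Finset.prod_add_prod_le (Finset.mem_univ (Classical.arbitrary n)) (hrow _)
          (fun k _ _ => by linarith [hrow k]) (fun k _ _ => one_le_pow₀ one_le_two)
          (fun k _ => hnonneg k) fun _ _ => zero_le_one

theorem mul_add_one_le_systemSize (d m : ℕ) (a : Fin m → Fin d → ℤ) (b : Fin m → ℤ) :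
    m * (d + 1) ≤ systemSize d m a b := by
  have one_le_bitSize (z : ℤ) : 1 ≤ bitSize z := Nat.le_add_left _ _
  calc m * (d + 1) = ∑ _j : Fin m, (∑ _i : Fin d, 1 + 1) := by simp
    _ ≤ systemSize d m a b :=
        Finset.sum_le_sum fun j _ =>
          add_le_add (Finset.sum_le_sum fun i _ => one_le_bitSize (a j i)) (one_le_bitSize (b j))

end BitSize

section Bases

variable {ι κ 𝕜 V : Type*} [Field 𝕜] [AddCommGroup V] [Module 𝕜 V]

theorem exists_basis_eq_comp (e : Module.Basis κ 𝕜 V) {v : ι → V}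
    (hv : Submodule.span 𝕜 (range v) = ⊤) :
    ∃ (f : κ → ι) (B : Module.Basis κ 𝕜 V), ⇑B = v ∘ f := by
  obtain ⟨τ, g, -, hspan, hli⟩ := exists_linearIndependent' 𝕜 v
  let B := Module.Basis.mk hli (hspan.trans hv).ge
  refine ⟨g ∘ (B.indexEquiv e).symm, B.reindex (B.indexEquiv e), ?_⟩
  ext k
  simp [B]

variable [LinearOrder 𝕜] [IsStrictOrderedRing 𝕜] [Finite κ] [Finite ι]

theorem exists_basis_eq_comp_abs_repr_le_one (e : Module.Basis κ 𝕜 V) {v : ι → V}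
    (hv : Submodule.span 𝕜 (range v) = ⊤) :
    ∃ (f : κ → ι) (B : Module.Basis κ 𝕜 V), ⇑B = v ∘ f ∧ ∀ j k, |B.repr (v j) k| ≤ 1 := by
  classical
  have := Fintype.ofFinite κ
  obtain ⟨f₀, B₀, hB₀⟩ := exists_basis_eq_comp e hv
  have : Nonempty (κ → ι) := ⟨f₀⟩
  -- By Cramer's rule a subfamily of maximal determinant has coordinates at most one.
  obtain ⟨f, hf⟩ := Finite.exists_max fun f : κ → ι => |e.det (v ∘ f)|
  have hdet : 0 < |e.det (v ∘ f)| :=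
    (abs_pos.mpr (hB₀ ▸ (e.isUnit_det B₀).ne_zero)).trans_le (hf f₀)
  obtain ⟨hli, hspan⟩ := e.is_basis_iff_det.mpr (abs_pos.mp hdet).isUnit
  refine ⟨f, Module.Basis.mk hli hspan.ge, Module.Basis.coe_mk hli hspan.ge, fun j k => ?_⟩
  have cramer : e.det (v ∘ f) * (Module.Basis.mk hli hspan.ge).repr (v j) k =
      e.det (v ∘ Function.update f k j) := by
    rw [Function.comp_update]
    exact LinearMap.congr_fun (e.det_smul_mk_coord_eq_det_update hli hspan.ge k) (v j)
  refine le_of_mul_le_mul_left ?_ hdet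
  rw [← abs_mul, cramer, mul_one]
  exact hf _

theorem exists_basis_eq_comp_abs_repr_mul_le (e : Module.Basis κ 𝕜 V) {v : ι → V}
    (hv : Submodule.span 𝕜 (range v) = ⊤) {w : ι → 𝕜} (hw : ∀ j, 0 < w j) :
    ∃ (f : κ → ι) (B : Module.Basis κ 𝕜 V),
      ⇑B = v ∘ f ∧ ∀ j k, |B.repr (v j) k| * w (f k) ≤ w j := by
  have hu : Submodule.span 𝕜 (range fun j => (w j)⁻¹ • v j) = ⊤ := by
    refine eq_top_iff.mpr (hv.ge.trans (Submodule.span_le.mpr ?_))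
    rintro _ ⟨j, rfl⟩
    rw [← smul_inv_smul₀ (hw j).ne' (v j)]
    exact Submodule.smul_mem _ _ (Submodule.subset_span ⟨j, rfl⟩)
  obtain ⟨f, B, hB, hle⟩ := exists_basis_eq_comp_abs_repr_le_one e hu
  let c (k : κ) : 𝕜ˣ := Units.mk0 (w (f k)) (hw _).ne'
  refine ⟨f, B.unitsSMul c, ?_, fun j k => ?_⟩
  · ext k
    simp [c, hB, Module.Basis.unitsSMul_apply, Units.smul_def, (hw (f k)).ne']
  · have := hle j k
    rw [map_smul, Finsupp.smul_apply, smul_eq_mul, abs_mul, abs_inv, abs_of_pos (hw j),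
      inv_mul_le_iff₀ (hw j), mul_one] at this
    rw [Module.Basis.repr_unitsSMul, Units.smul_def, smul_eq_mul, abs_mul, mul_right_comm]
    simpa [c, abs_of_pos (hw (f k)), (hw (f k)).ne'] using this

end Bases

section Polyhedra

variable {ι V : Type*} [AddCommGroup V] [Module ℝ V]

theorem affineMap_two_smul_sub (g : V →ᵃ[ℝ] ℝ) (x p : V) :
    g ((2 : ℝ) • x - p) = 2 * g x - g p := by
  have h := Convex.combo_affine_apply (f := g) (x := x) (y := p) (show (2 : ℝ) + -1 = 1 by norm_num)
  simpa [sub_eq_add_neg] using h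

theorem eq_of_mem_extremePoints_of_two_smul_sub_mem {A : Set V} {x p : V}
    (hx : x ∈ extremePoints ℝ A) (hp : p ∈ A) (hr : (2 : ℝ) • x - p ∈ A) : p = x :=
  (mem_extremePoints.mp hx).2 p hp _ hr
    ⟨1 / 2, 1 / 2, by norm_num, by norm_num, by norm_num, by module⟩ |>.1

/-- The polyhedron cut out by the affine inequalities `0 ≤ s j x`. -/
def polyhedron (s : ι → V →ᵃ[ℝ] ℝ) : Set V := {x | ∀ j, 0 ≤ s j x}

variable {s : ι → V →ᵃ[ℝ] ℝ}

theorem convex_polyhedron : Convex ℝ (polyhedron s) := by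
  simp only [polyhedron, ofPred_forall]
  exact convex_iInter fun j => (convex_Ici 0).affine_preimage (s j)

theorem span_linear_active_eq_top [Finite ι] [FiniteDimensional ℝ V] {x : V}
    (hx : x ∈ extremePoints ℝ (polyhedron s)) :
    Submodule.span ℝ (range fun j : {j // s j x = 0} => (s j).linear) = ⊤ := by
  set W := Submodule.span ℝ (range fun j : {j // s j x = 0} => (s j).linear)
  suffices hW : W.dualCoannihilator = ⊥ by
    rw [← Subspace.dualCoannihilator_dualAnnihilator_eq (W := W), hW,
      Submodule.dualAnnihilator_bot]
  refine (Submodule.eq_bot_iff _).mpr fun v hv => ?_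
  have active_eq_zero (j : ι) (hj : s j x = 0) : (s j).linear v = 0 :=
    (Submodule.mem_dualCoannihilator v).mp hv _ (Submodule.subset_span ⟨⟨j, hj⟩, rfl⟩)
  have small (j : ι) : ∀ᶠ ε in nhdsWithin (0 : ℝ) (Ioi 0), |ε * (s j).linear v| ≤ s j x := by
    rcases (hx.1 j).eq_or_lt with hj | hj
    · simp [← hj, active_eq_zero j hj.symm]
    · have lim : Tendsto (fun ε : ℝ => |ε * (s j).linear v|) (nhds 0) (nhds 0) :=
        Continuous.tendsto' (by fun_prop) _ _ (by simp)
      exact (lim.mono_left nhdsWithin_le_nhds).eventually_le_const hj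
  obtain ⟨ε, hε, hεpos⟩ := ((eventually_all.mpr small).and self_mem_nhdsWithin).exists
  have hadd : ε • v + x ∈ polyhedron s := fun j => by
    have := neg_le_of_abs_le (hε j)
    rw [← vadd_eq_add, (s j).map_vadd, vadd_eq_add, map_smul, smul_eq_mul]
    linarith
  have hsub : (2 : ℝ) • x - (ε • v + x) ∈ polyhedron s := fun j => by
    have := le_of_abs_le (hε j)
    rw [affineMap_two_smul_sub, ← vadd_eq_add, (s j).map_vadd, vadd_eq_add, map_smul, smul_eq_mul]
    linarith
  have hfix := eq_of_mem_extremePoints_of_two_smul_sub_mem hx hadd hsub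
  exact (smul_eq_zero.mp (add_eq_right.mp hfix)).resolve_left hεpos.ne'

end Polyhedra

theorem isClosed_polyhedron {ι V : Type*} [NormedAddCommGroup V] [NormedSpace ℝ V]
    [FiniteDimensional ℝ V] (s : ι → V →ᵃ[ℝ] ℝ) : IsClosed (polyhedron s) := by
  simp only [polyhedron, ofPred_forall]
  exact isClosed_iInter fun j => isClosed_le continuous_const (s j).continuous_of_finiteDimensional

theorem le_of_forall_mem_extremePoints_le {V : Type*} [AddCommGroup V] [Module ℝ V]
    [TopologicalSpace V] [T2Space V] [IsTopologicalAddGroup V] [ContinuousSMul ℝ V]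
    [LocallyConvexSpace ℝ V] {K : Set V} (hK : IsCompact K) (hconv : Convex ℝ K)
    {g : V →ᵃ[ℝ] ℝ} (hg : Continuous g) {c : ℝ} (hc : ∀ x ∈ extremePoints ℝ K, g x ≤ c)
    {x : V} (hx : x ∈ K) : g x ≤ c := by
  rw [← closure_convexHull_extremePoints hK hconv] at hx
  exact closure_minimal (convexHull_min hc ((convex_Iic c).affine_preimage g))
    (isClosed_Iic.preimage hg) hx

section Dominating

variable {ι κ V : Type*} [Fintype κ] [AddCommGroup V] [Module ℝ V]

/-- The functions `w (f k)` dominate the family `w` at `x`: the linear part of each `w j` is a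
combination of theirs in which every term is, at `x`, at most `w j` in absolute value. -/
def IsDominating (w : ι → V →ᵃ[ℝ] ℝ) (f : κ → ι) (x : V) : Prop :=
  ∀ j, ∃ μ : κ → ℝ, (w j).linear = ∑ k, μ k • (w (f k)).linear ∧
    ∀ k, |μ k| * w (f k) x ≤ w j x

variable {w : ι → V →ᵃ[ℝ] ℝ}

theorem exists_isDominating [Finite ι] (e : Module.Basis κ ℝ V)
    (hspan : Submodule.span ℝ (range fun j => (w j).linear) = ⊤) {x : V} (hx : ∀ j, 0 < w j x) :
    ∃ f : κ → ι, IsDominating w f x := by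
  classical
  obtain ⟨f, B, hB, hle⟩ := exists_basis_eq_comp_abs_repr_mul_le e.dualBasis hspan hx
  refine ⟨f, fun j => ⟨B.repr (w j).linear, ?_, hle j⟩⟩
  conv_lhs => rw [← B.sum_repr (w j).linear, hB]
  rfl

theorem IsDominating.abs_sub_le {f : κ → ι} {x z : V} (hdom : IsDominating w f x) {ε : κ → ℝ}
    (hε : ∀ k, 0 ≤ ε k) (hz : ∀ k, |w (f k) z - w (f k) x| ≤ ε k * w (f k) x) (j : ι) :
    |w j z - w j x| ≤ (∑ k, ε k) * w j x := by
  have sub_eq (i : ι) : w i z - w i x = (w i).linear (z - x) :=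
    ((w i).linearMap_vsub z x).symm
  obtain ⟨μ, hμ, hle⟩ := hdom j
  calc |w j z - w j x| = |∑ k, μ k * (w (f k) z - w (f k) x)| := by
        simp only [sub_eq, hμ, LinearMap.sum_apply, LinearMap.smul_apply, smul_eq_mul]
    _ ≤ ∑ k, |μ k * (w (f k) z - w (f k) x)| := Finset.abs_sum_le_sum_abs _ _
    _ ≤ ∑ k, ε k * w j x := Finset.sum_le_sum fun k _ => by
        calc |μ k * (w (f k) z - w (f k) x)| ≤ |μ k| * (ε k * w (f k) x) := by
              rw [abs_mul]
              exact mul_le_mul_of_nonneg_left (hz k) (abs_nonneg _)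
          _ = ε k * (|μ k| * w (f k) x) := mul_left_comm _ _ _
          _ ≤ ε k * w j x := mul_le_mul_of_nonneg_left (hle k) (hε k)
    _ = (∑ k, ε k) * w j x := (Finset.sum_mul _ _ _).symm

end Dominating

section NearRay

variable {ι V : Type*} [AddCommGroup V] [Module ℝ V] {n : ℕ}

/-- Each ratio `w (f i) / w (f 0)` takes at `p` the value it has at `x`, up to a relative error
`δ`: in the coordinates `w ∘ f`, the point `p` is close to the ray from the origin through `x`.
Denominators are cleared so that, where `w (f 0)` is nonnegative, the condition is convex in `p`. -/
def IsNearRay (w : ι → V →ᵃ[ℝ] ℝ) (f : Fin (n + 1) → ι) (δ : ℝ) (x p : V) : Prop :=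
  ∀ i : Fin n, |w (f 0) x * w (f i.succ) p - w (f i.succ) x * w (f 0) p| ≤
    δ * (w (f i.succ) x * w (f 0) p)

/-- No point of `T` reflected in another point of `T` stays in the region where all of `w` is
positive. -/
def IsReflectionFree (w : ι → V →ᵃ[ℝ] ℝ) (T : Set V) : Prop :=
  ∀ x ∈ T, ∀ p ∈ T, p ≠ x → ∃ j, w j ((2 : ℝ) • x - p) ≤ 0

variable {w : ι → V →ᵃ[ℝ] ℝ} {f : Fin (n + 1) → ι} {δ : ℝ} {x p q : V} {α β : ℝ}

theorem IsNearRay.abs_combo_sub_le (hp : IsNearRay w f δ x p) (hq : IsNearRay w f δ x q)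
    (hx : 0 < w (f 0) x) (hα : 0 ≤ α) (hβ : 0 ≤ β) (hαβ : α + β = 1)
    (hlevel : α * w (f 0) p + β * w (f 0) q = w (f 0) x) (i : Fin n) :
    |w (f i.succ) (α • p + β • q) - w (f i.succ) x| ≤ δ * w (f i.succ) x := by
  refine le_of_mul_le_mul_left ?_ hx
  have hcombo : w (f i.succ) (α • p + β • q) = α * w (f i.succ) p + β * w (f i.succ) q :=
    Convex.combo_affine_apply hαβ
  calc w (f 0) x * |w (f i.succ) (α • p + β • q) - w (f i.succ) x|
      = |α * (w (f 0) x * w (f i.succ) p - w (f i.succ) x * w (f 0) p) +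
          β * (w (f 0) x * w (f i.succ) q - w (f i.succ) x * w (f 0) q)| := by
        rw [← abs_of_pos hx, ← abs_mul, abs_of_pos hx, hcombo]
        congr 1
        linear_combination w (f i.succ) x * hlevel
    _ ≤ α * (δ * (w (f i.succ) x * w (f 0) p)) + β * (δ * (w (f i.succ) x * w (f 0) q)) := by
        refine (abs_add_le _ _).trans ?_
        rw [abs_mul, abs_mul, abs_of_nonneg hα, abs_of_nonneg hβ]
        gcongr
        exacts [hp i, hq i]
    _ = w (f 0) x * (δ * w (f i.succ) x) := by
        linear_combination δ * w (f i.succ) x * hlevel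

theorem IsDominating.combo_le (hdom : IsDominating w f x) (hδ : 0 ≤ δ)
    (hp : IsNearRay w f δ x p) (hq : IsNearRay w f δ x q) (hx : 0 < w (f 0) x)
    (hα : 0 ≤ α) (hβ : 0 ≤ β) (hαβ : α + β = 1)
    (hlevel : α * w (f 0) p + β * w (f 0) q = w (f 0) x) (j : ι) :
    α * w j p + β * w j q ≤ (1 + n * δ) * w j x := by
  have combo (i : ι) : w i (α • p + β • q) = α * w i p + β * w i q :=
    Convex.combo_affine_apply hαβ
  have hclose := hdom.abs_sub_le (z := α • p + β • q) (ε := Fin.cons 0 fun _ => δ)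
    (Fin.cases le_rfl fun _ => hδ)
    (Fin.cases (by simp [combo, hlevel]) fun i =>
      hp.abs_combo_sub_le hq hx hα hβ hαβ hlevel i) j
  rw [combo, Fin.sum_cons, zero_add, Finset.sum_const, Finset.card_univ, Fintype.card_fin,
    nsmul_eq_mul] at hclose
  linarith [le_of_abs_le hclose]

-- For larger `α` the reflection of `p` in `x` would satisfy all constraints, since then
-- `α * w j p < (1 + n * δ) * w j x ≤ 2 * α * w j x`.
theorem IsDominating.coeff_lt (hdom : IsDominating w f x) (hδ : 0 ≤ δ) (hnδ : n * δ < 1)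
    (hp : IsNearRay w f δ x p) (hq : IsNearRay w f δ x q) (hx : ∀ j, 0 < w j x)
    (hqpos : ∀ j, 0 < w j q) (hrefl : ∃ j, w j ((2 : ℝ) • x - p) ≤ 0)
    (hα : 0 ≤ α) (hβ : 0 ≤ β) (hαβ : α + β = 1)
    (hlevel : α * w (f 0) p + β * w (f 0) q = w (f 0) x) :
    α < (1 + n * δ) / 2 := by
  by_contra! hlarge
  obtain ⟨j, hj⟩ := hrefl
  rw [affineMap_two_smul_sub, sub_nonpos] at hj
  have hcombo := hdom.combo_le hδ hp hq (hx _) hα hβ hαβ hlevel j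
  have hdouble : (1 + n * δ) * w j x ≤ α * w j p :=
    calc (1 + n * δ) * w j x ≤ α * (2 * w j x) := by nlinarith [hx j]
      _ ≤ α * w j p := mul_le_mul_of_nonneg_left hj hα
  have hβ0 : β = 0 :=
    le_antisymm (nonpos_of_mul_nonpos_left (by linarith) (hqpos j)) hβ
  have hα1 : α = 1 := by linarith
  subst hβ0 hα1
  nlinarith [hx j]

end NearRay

section Balanced

variable {𝕜 : Type*} [Field 𝕜] [LinearOrder 𝕜] [IsStrictOrderedRing 𝕜]

/-- A point of `S` between two others splits the interval they span into two parts, each shorter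
than `θ` times the whole. -/
def IsBalanced (θ : 𝕜) (S : Finset 𝕜) : Prop :=
  ∀ p ∈ S, ∀ x ∈ S, ∀ q ∈ S, p < x → x < q → x - p < θ * (q - p) ∧ q - x < θ * (q - p)

variable {θ : 𝕜} {S : Finset 𝕜}

theorem IsBalanced.card_le_two (hS : IsBalanced θ S) (hθ : θ ≤ 1 / 2) : S.card ≤ 2 := by
  by_contra! hcard
  let y := S.orderEmbOfCardLe hcard
  have mem : ∀ i, y i ∈ S := S.orderEmbOfCardLe_mem hcard
  have lt {i j : Fin 3} (h : i < j) : y i < y j := y.strictMono h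
  have h02 : y 0 < y 2 := lt (by decide)
  obtain ⟨hleft, hright⟩ := hS _ (mem 0) _ (mem 1) _ (mem 2) (lt (by decide)) (lt (by decide))
  nlinarith

theorem IsBalanced.card_le_three (hS : IsBalanced θ S) (hθ : θ ^ 2 + θ ≤ 1) : S.card ≤ 3 := by
  by_contra! hcard
  let y := S.orderEmbOfCardLe hcard
  have mem : ∀ i, y i ∈ S := S.orderEmbOfCardLe_mem hcard
  have lt {i j : Fin 4} (h : i < j) : y i < y j := y.strictMono h
  have h01 : y 0 < y 1 := lt (by decide)
  have h02 : y 0 < y 2 := lt (by decide)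
  have h03 : y 0 < y 3 := lt (by decide)
  have inner := (hS _ (mem 0) _ (mem 1) _ (mem 2) (lt (by decide)) (lt (by decide))).1
  have outer := hS _ (mem 0) _ (mem 2) _ (mem 3) (lt (by decide)) (lt (by decide))
  have right := (hS _ (mem 0) _ (mem 1) _ (mem 3) (lt (by decide)) (lt (by decide))).2
  have hθpos : 0 < θ := pos_of_mul_pos_left (by linarith) (sub_pos.mpr h02).le
  have : y 3 - y 0 < (θ ^ 2 + θ) * (y 3 - y 0) := by
    calc y 3 - y 0 < θ * (y 2 - y 0) + θ * (y 3 - y 0) := by linarith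
      _ ≤ θ * (θ * (y 3 - y 0)) + θ * (y 3 - y 0) := by gcongr; exact outer.1.le
      _ = (θ ^ 2 + θ) * (y 3 - y 0) := by ring
  nlinarith

end Balanced

section NarrowCell

variable {ι V : Type*} [AddCommGroup V] [Module ℝ V] {n : ℕ}

/-- A reflection-free set whose points share a dominating family `w ∘ f` and lie, in the
coordinates it provides, close to one ray. -/
structure IsNarrowCell (w : ι → V →ᵃ[ℝ] ℝ) (f : Fin (n + 1) → ι) (δ : ℝ) (T : Set V) : Prop where
  pos : ∀ x ∈ T, ∀ j, 0 < w j x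
  dominating : ∀ x ∈ T, IsDominating w f x
  nearRay : ∀ x ∈ T, ∀ p ∈ T, IsNearRay w f δ x p
  reflectionFree : IsReflectionFree w T

variable {w : ι → V →ᵃ[ℝ] ℝ} {f : Fin (n + 1) → ι} {δ : ℝ}

theorem IsNarrowCell.coeff_lt {T : Set V} (hT : IsNarrowCell w f δ T) (hδ : 0 ≤ δ)
    (hnδ : n * δ < 1) {x p q : V} (hx : x ∈ T) (hp : p ∈ T) (hq : q ∈ T) (hpx : p ≠ x) {α β : ℝ}
    (hα : 0 ≤ α) (hβ : 0 ≤ β) (hαβ : α + β = 1)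
    (hlevel : α * w (f 0) p + β * w (f 0) q = w (f 0) x) : α < (1 + n * δ) / 2 :=
  (hT.dominating x hx).coeff_lt hδ hnδ (hT.nearRay x hx p hp) (hT.nearRay x hx q hq)
    (hT.pos x hx) (hT.pos q hq) (hT.reflectionFree x hx p hp hpx) hα hβ hαβ hlevel

theorem IsNarrowCell.injOn {T : Set V} (hT : IsNarrowCell w f δ T) (hδ : 0 ≤ δ)
    (hnδ : n * δ < 1) : InjOn (w (f 0)) T := by
  intro p hp x hx hpx
  by_contra hne
  have := hT.coeff_lt hδ hnδ hx hp hp hne zero_le_one le_rfl (add_zero 1) (by simpa using hpx)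
  linarith

theorem IsNarrowCell.isBalanced_image {T : Finset V} (hT : IsNarrowCell w f δ (T : Set V))
    (hδ : 0 ≤ δ) (hnδ : n * δ < 1) : IsBalanced ((1 + n * δ) / 2) (T.image (w (f 0))) := by
  simp only [IsBalanced, Finset.forall_mem_image]
  intro p hp x hx q hq hpx hxq
  obtain ⟨α, β, hα, hβ, hαβ, hlevel⟩ : w (f 0) x ∈ openSegment ℝ (w (f 0) p) (w (f 0) q) :=
    Ioo_subset_openSegment ⟨hpx, hxq⟩
  simp only [smul_eq_mul] at hlevel
  have hpq : 0 < w (f 0) q - w (f 0) p := by linarith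
  have hp_ne : p ≠ x := fun h => hpx.ne (congrArg _ h)
  have hq_ne : q ≠ x := fun h => hxq.ne' (congrArg _ h)
  have hα_lt : α < (1 + n * δ) / 2 := hT.coeff_lt hδ hnδ hx hp hq hp_ne hα.le hβ.le hαβ hlevel
  have hβ_lt : β < (1 + n * δ) / 2 :=
    hT.coeff_lt hδ hnδ hx hq hp hq_ne hβ.le hα.le ((add_comm _ _).trans hαβ)
      ((add_comm _ _).trans hlevel)
  have left_eq : w (f 0) x - w (f 0) p = β * (w (f 0) q - w (f 0) p) := by
    linear_combination w (f 0) p * hαβ - hlevel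
  have right_eq : w (f 0) q - w (f 0) x = α * (w (f 0) q - w (f 0) p) := by
    linear_combination hlevel - w (f 0) q * hαβ
  rw [left_eq, right_eq]
  exact ⟨mul_lt_mul_of_pos_right hβ_lt hpq, mul_lt_mul_of_pos_right hα_lt hpq⟩

theorem IsNarrowCell.card_le {T : Finset V} (hT : IsNarrowCell w f (1 / (5 * n)) (T : Set V)) :
    T.card ≤ n + 2 := by
  have hδ : (0 : ℝ) ≤ 1 / (5 * n) := by positivity
  rcases n.eq_zero_or_pos with rfl | hn
  · have hnδ : ((0 : ℕ) : ℝ) * (1 / (5 * (0 : ℕ))) < 1 := by simp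
    rw [← Finset.card_image_of_injOn (hT.injOn hδ hnδ)]
    exact (hT.isBalanced_image hδ hnδ).card_le_two (by simp)
  · have hnδ : (n : ℝ) * (1 / (5 * n)) = 1 / 5 := by field_simp
    have hnδ_lt : (n : ℝ) * (1 / (5 * n)) < 1 := by rw [hnδ]; norm_num
    rw [← Finset.card_image_of_injOn (hT.injOn hδ hnδ_lt)]
    exact ((hT.isBalanced_image hδ hnδ_lt).card_le_three (by rw [hnδ]; norm_num)).trans (by omega)

end NarrowCell

section Counting

theorem abs_sub_le_of_abs_log_sub_log_le {a b ε : ℝ} (ha : 0 < a) (hb : 0 < b) (hε : ε ≤ 1)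
    (h : |Real.log a - Real.log b| ≤ ε) : |a - b| ≤ 2 * ε * b := by
  have hab : a - b = (Real.exp (Real.log a - Real.log b) - 1) * b := by
    rw [Real.exp_sub, Real.exp_log ha, Real.exp_log hb]
    field_simp
  rw [hab, abs_mul, abs_of_pos hb]
  gcongr
  exact (Real.abs_exp_sub_one_le (h.trans hε)).trans (by gcongr)

variable {ι V : Type*} [AddCommGroup V] [Module ℝ V] {n : ℕ}

/-- The cell, in a grid of mesh `1 / (10 * n)`, of the logarithms of the ratios
`w (f i) / w (f 0)` at `x`. -/
def rayCell (w : ι → V →ᵃ[ℝ] ℝ) (f : Fin (n + 1) → ι) (x : V) (i : Fin n) : ℤ :=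
  ⌊10 * n * (Real.log (w (f i.succ) x) - Real.log (w (f 0) x))⌋

variable {w : ι → V →ᵃ[ℝ] ℝ} {f : Fin (n + 1) → ι} {x p : V}

theorem isNearRay_of_rayCell_eq (hx : ∀ j, 0 < w j x) (hp : ∀ j, 0 < w j p)
    (h : rayCell w f x = rayCell w f p) : IsNearRay w f (1 / (5 * n)) x p := by
  intro i
  have hn : (1 : ℝ) ≤ n := mod_cast i.pos
  have hfloor := Int.abs_sub_lt_one_of_floor_eq_floor (congrFun h i).symm
  have hlog : |Real.log (w (f 0) x * w (f i.succ) p) - Real.log (w (f i.succ) x * w (f 0) p)| ≤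
      1 / (10 * n) := by
    have hmesh : (0 : ℝ) < 10 * n := by positivity
    rw [Real.log_mul (hx _).ne' (hp _).ne', Real.log_mul (hx _).ne' (hp _).ne',
      le_div_iff₀' hmesh]
    refine le_of_eq_of_le ?_ hfloor.le
    rw [← mul_sub, abs_mul, abs_of_pos hmesh]
    congr 2
    ring
  refine (abs_sub_le_of_abs_log_sub_log_le (mul_pos (hx _) (hp _)) (mul_pos (hx _) (hp _)) ?_
    hlog).trans_eq ?_
  · rw [div_le_one (by positivity)]
    linarith
  · field_simp
    ring

theorem rayCell_mem_Icc {N : ℕ} (hx : ∀ j, 1 ≤ w j x) (hN : ∀ j, 10 * n * Real.log (w j x) ≤ N)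
    (i : Fin n) : rayCell w f x i ∈ Finset.Icc (-N : ℤ) N := by
  have log_nonneg (j : ι) : 0 ≤ 10 * n * Real.log (w j x) :=
    mul_nonneg (by positivity) (Real.log_nonneg (hx j))
  rw [Finset.mem_Icc, rayCell, Int.le_floor, mul_sub]
  constructor
  · push_cast
    linarith [hN (f 0), log_nonneg (f i.succ)]
  · refine Int.floor_le_iff.mpr ?_
    push_cast
    linarith [hN (f i.succ), log_nonneg (f 0)]

theorem IsReflectionFree.mono {S T : Set V} (hT : IsReflectionFree w T) (hST : S ⊆ T) :
    IsReflectionFree w S :=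
  fun x hx p hp => hT x (hST hx) p (hST hp)

theorem IsReflectionFree.card_le [Fintype ι] (e : Module.Basis (Fin (n + 1)) ℝ V)
    (hspan : Submodule.span ℝ (range fun j => (w j).linear) = ⊤) {T : Finset V}
    (hT : IsReflectionFree w (T : Set V)) (hone : ∀ x ∈ T, ∀ j, 1 ≤ w j x) {N : ℕ}
    (hN : ∀ x ∈ T, ∀ j, 10 * n * Real.log (w j x) ≤ N) :
    T.card ≤ (n + 2) * (Fintype.card ι ^ (n + 1) * (2 * N + 1) ^ n) := by
  classical
  rcases T.eq_empty_or_nonempty with rfl | ⟨x₀, hx₀⟩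
  · simp
  have hpos (x : V) (hx : x ∈ T) (j : ι) : 0 < w j x := one_pos.trans_le (hone x hx j)
  have dominating (x : V) (hx : x ∈ T) : ∃ f : Fin (n + 1) → ι, IsDominating w f x :=
    exists_isDominating e hspan (hpos x hx)
  have : Nonempty (Fin (n + 1) → ι) := ⟨(dominating x₀ hx₀).choose⟩
  choose! F hF using dominating
  let keys := (Finset.univ : Finset (Fin (n + 1) → ι)) ×ˢ
    Fintype.piFinset fun _ : Fin n => Finset.Icc (-N : ℤ) N
  let key (x : V) := (F x, rayCell w (F x) x)
  have key_mem : ∀ x ∈ T, key x ∈ keys := fun x hx =>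
    Finset.mk_mem_product (Finset.mem_univ _)
      (Fintype.mem_piFinset.mpr (rayCell_mem_Icc (hone x hx) (hN x hx)))
  have card_keys : keys.card = Fintype.card ι ^ (n + 1) * (2 * N + 1) ^ n := by
    have : (N + 1 + N : ℤ).toNat = 2 * N + 1 := by omega
    simp [keys, Fintype.card_piFinset, this]
  rw [← card_keys]
  refine Finset.card_le_mul_card_image_of_maps_to key_mem (n + 2) ?_
  rintro ⟨f, c⟩ -
  have fibre {x : V} (hx : x ∈ ({x ∈ T | key x = (f, c)} : Finset V)) :
      x ∈ T ∧ F x = f ∧ rayCell w f x = c := by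
    obtain ⟨hxT, hkey⟩ := Finset.mem_filter.mp hx
    obtain ⟨rfl, rfl⟩ := Prod.mk.inj hkey
    exact ⟨hxT, rfl, rfl⟩
  refine IsNarrowCell.card_le (w := w) (f := f) ⟨fun x hx => hpos x (fibre hx).1, fun x hx => ?_,
    fun x hx p hp => ?_, hT.mono (Finset.filter_subset _ _)⟩
  · obtain ⟨hxT, rfl, -⟩ := fibre hx
    exact hF x hxT
  · exact isNearRay_of_rayCell_eq (hpos x (fibre hx).1) (hpos p (fibre hp).1)
      ((fibre hx).2.2.trans (fibre hp).2.2.symm)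

end Counting

section Slack

variable {ι : Type*} {d : ℕ}

/-- The slack `b j - ⟨a j, x⟩` of the `j`-th inequality of the system, as an affine function
of `x`. -/
def slack (a : ι → Fin d → ℤ) (b : ι → ℤ) (j : ι) : E d →ᵃ[ℝ] ℝ :=
  AffineMap.const ℝ (E d) (b j : ℝ) -
    (∑ i, (a j i : ℝ) • (EuclideanSpace.projₗ i : E d →ₗ[ℝ] ℝ)).toAffineMap

variable {a : ι → Fin d → ℤ} {b : ι → ℤ} {x p : E d}

theorem slack_apply (j : ι) : slack a b j x = b j - ∑ i, (a j i : ℝ) * x i := by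
  simp [slack]

theorem slack_linear_apply (j : ι) (v : E d) :
    (slack a b j).linear v = -∑ i, (a j i : ℝ) * v i := by
  simp [slack]

theorem slack_add_one_apply (j : ι) : slack a (b + 1) j x = slack a b j x + 1 := by
  simp only [slack_apply, Pi.add_apply, Pi.one_apply, Int.cast_add, Int.cast_one]
  ring

theorem polyhedron_slack :
    polyhedron (slack a b) = {x : E d | ∀ j, (∑ i, (a j i : ℝ) * x i) ≤ (b j : ℝ)} := by
  simp only [polyhedron, slack_apply, sub_nonneg]

theorem two_smul_sub_mem_intPoints (hx : x ∈ intPoints d) (hp : p ∈ intPoints d) :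
    (2 : ℝ) • x - p ∈ intPoints d := by
  intro i
  obtain ⟨k, hk⟩ := hx i
  obtain ⟨l, hl⟩ := hp i
  exact ⟨2 * k - l, by simp [hk, hl]⟩

theorem mem_polyhedron_slack_of_slack_add_one_pos (hx : x ∈ intPoints d)
    (hpos : ∀ j, 0 < slack a (b + 1) j x) : x ∈ polyhedron (slack a b) := by
  choose z hz using hx
  intro j
  have hcast : slack a b j x = ((b j - ∑ i, a j i * z i : ℤ) : ℝ) := by
    simp [slack_apply, hz]
  have := hpos j
  rw [slack_add_one_apply, hcast] at this
  rw [hcast]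
  exact_mod_cast Int.lt_add_one_iff.mp (by exact_mod_cast this)

theorem isReflectionFree_extremePoints_integerHull :
    IsReflectionFree (slack a (b + 1))
      (extremePoints ℝ (integerHull d (polyhedron (slack a b)))) := by
  intro x hx p hp hne
  by_contra! hpos
  have hr := two_smul_sub_mem_intPoints (extremePoints_convexHull_subset hx).1
    (extremePoints_convexHull_subset hp).1
  exact hne (eq_of_mem_extremePoints_of_two_smul_sub_mem hx hp.1
    (subset_convexHull ℝ _ ⟨hr, mem_polyhedron_slack_of_slack_add_one_pos hr hpos⟩))

theorem exists_active_det_ne_zero [Finite ι] (hx : x ∈ extremePoints ℝ (polyhedron (slack a b))) :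
    ∃ f : Fin d → ι, (∀ k, slack a b (f k) x = 0) ∧ (Matrix.of fun k => a (f k)).det ≠ 0 := by
  obtain ⟨f, B, hB⟩ := exists_basis_eq_comp
    (EuclideanSpace.basisFun (Fin d) ℝ).toBasis.dualBasis (span_linear_active_eq_top hx)
  refine ⟨fun k => f k, fun k => (f k).2, fun hdet => ?_⟩
  obtain ⟨v, hv, hav⟩ := Matrix.exists_mulVec_eq_zero_iff.mpr hdet
  let v' : E d := WithLp.toLp 2 fun i => (v i : ℝ)
  have basis_apply (k : Fin d) : B k v' = 0 := by
    have := congrArg (Int.cast : ℤ → ℝ) (congrFun hav k)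
    simpa [hB, slack_linear_apply, v', Matrix.mulVec, dotProduct] using this
  have hv' : v' = 0 := (Module.forall_dual_apply_eq_zero_iff ℝ v').mp fun g => by
    rw [← B.sum_repr g, LinearMap.sum_apply]
    exact Finset.sum_eq_zero fun k _ => by rw [LinearMap.smul_apply, basis_apply, smul_zero]
  refine hv (funext fun i => ?_)
  have := congrArg (fun u : E d => u i) hv'
  simpa [v'] using this

end Slack

section Vertices

variable {d m : ℕ} {a : Fin m → Fin d → ℤ} {b : Fin m → ℤ} {x : E d}

/-- The row `(a j, b j)` of the extended coefficient matrix `(A | b)`. -/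
def extendedRow (a : Fin m → Fin d → ℤ) (b : Fin m → ℤ) (j : Fin m) : Fin d ⊕ Unit → ℤ :=
  Sum.elim (a j) fun _ => b j

theorem abs_det_extendedRow_add_one_le (g : Fin d ⊕ Unit → Fin m) :
    |(Matrix.of fun k => extendedRow a b (g k)).det| + 1 ≤ 2 ^ systemSize d m a b := by
  by_cases hg : Function.Injective g
  · refine (abs_det_add_one_le_two_pow_sum_bitSize _).trans (pow_le_pow_right₀ one_le_two ?_)
    calc ∑ k, ∑ i, bitSize (extendedRow a b (g k) i)
        = ∑ j ∈ Finset.univ.map ⟨g, hg⟩, ((∑ i, bitSize (a j i)) + bitSize (b j)) := by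
          simp [extendedRow]
      _ ≤ systemSize d m a b := Finset.sum_le_sum_of_subset (Finset.subset_univ _)
  · obtain ⟨k, l, hkl, hne⟩ : ∃ k l, g k = g l ∧ k ≠ l := Function.not_injective_iff.mp hg
    rw [Matrix.det_zero_of_row_eq hne (by ext; simp [hkl])]
    simpa using one_le_pow₀ one_le_two

theorem cast_det_extendedRow_of_slack_eq_zero {f : Fin d → Fin m}
    (hf : ∀ k, slack a b (f k) x = 0) (j : Fin m) :
    ((Matrix.of fun k => extendedRow a b (Sum.elim f (fun _ => j) k)).det : ℝ) =
      (Matrix.of fun k => a (f k)).det * slack a b j x := by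
  have hx : ((Matrix.of fun k => a (f k)).map (Int.cast : ℤ → ℝ)).mulVec x.ofLp =
      fun k => (b (f k) : ℝ) := funext fun k => by
    have := hf k
    rw [slack_apply, sub_eq_zero] at this
    simpa [Matrix.mulVec, dotProduct] using this.symm
  have hdet := det_bordered_of_mulVec_eq _ (fun i => (a j i : ℝ)) (b j) hx
  rw [slack_apply, Int.cast_det, Int.cast_det]
  refine (congrArg Matrix.det ?_).trans hdet
  ext (_ | _) (_ | _) <;> simp [extendedRow]

theorem slack_add_one_le_of_mem_extremePoints
    (hx : x ∈ extremePoints ℝ (polyhedron (slack a b))) (j : Fin m) :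
    slack a (b + 1) j x ≤ 2 ^ systemSize d m a b := by
  obtain ⟨f, hf, hdet⟩ := exists_active_det_ne_zero hx
  have hbound : |((Matrix.of fun k => extendedRow a b (Sum.elim f (fun _ => j) k)).det : ℝ)| + 1 ≤
      2 ^ systemSize d m a b := mod_cast abs_det_extendedRow_add_one_le _
  have hone : (1 : ℝ) ≤ |((Matrix.of fun k => a (f k)).det : ℝ)| :=
    mod_cast Int.one_le_abs hdet
  rw [cast_det_extendedRow_of_slack_eq_zero hf, abs_mul, abs_of_nonneg (hx.1 j)] at hbound
  rw [slack_add_one_apply]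
  linarith [le_mul_of_one_le_left (hx.1 j) hone]

theorem slack_add_one_le (hK : Bornology.IsBounded (polyhedron (slack a b)))
    (hx : x ∈ polyhedron (slack a b)) (j : Fin m) :
    slack a (b + 1) j x ≤ 2 ^ systemSize d m a b :=
  le_of_forall_mem_extremePoints_le
    (Metric.isCompact_of_isClosed_isBounded (isClosed_polyhedron _) hK) convex_polyhedron
    (slack a (b + 1) j).continuous_of_finiteDimensional
    (fun _ hv => slack_add_one_le_of_mem_extremePoints hv j) hx

theorem span_linear_slack_eq_top (hK : Bornology.IsBounded (polyhedron (slack a b)))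
    (hne : (polyhedron (slack a b)).Nonempty) :
    Submodule.span ℝ (range fun j => (slack a (b + 1) j).linear) = ⊤ := by
  obtain ⟨v, hv⟩ := (Metric.isCompact_of_isClosed_isBounded
    (isClosed_polyhedron _) hK).extremePoints_nonempty hne
  have linear_eq (j : Fin m) : (slack a (b + 1) j).linear = (slack a b j).linear := by
    ext1 v
    simp only [slack_linear_apply]
  refine eq_top_mono (Submodule.span_mono ?_) (span_linear_active_eq_top hv)
  rintro _ ⟨j, rfl⟩
  exact ⟨j, linear_eq j⟩

theorem finite_intPoints_inter {K : Set (E d)} (hK : Bornology.IsBounded K) :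
    (intPoints d ∩ K).Finite := by
  obtain ⟨R, hR⟩ := hK.exists_norm_le
  refine ((finite_Icc (fun _ : Fin d => -⌈R⌉) fun _ => ⌈R⌉).image
    fun z => (WithLp.toLp 2 fun i => (z i : ℝ) : E d)).subset ?_
  rintro x ⟨hx, hxK⟩
  choose z hz using hx
  have hle (i : Fin d) : |z i| ≤ ⌈R⌉ := by
    have : |(z i : ℝ)| ≤ ⌈R⌉ := by
      rw [← hz, ← Real.norm_eq_abs]
      exact (PiLp.norm_apply_le x i).trans ((hR x hxK).trans (Int.le_ceil R))
    exact_mod_cast this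
  refine ⟨z, ⟨fun i => neg_le_of_abs_le (hle i), fun i => le_of_abs_le (hle i)⟩, ?_⟩
  ext
  exact (hz _).symm

end Vertices

section Bound

theorem ten_mul_log_le {n φ : ℕ} {t : ℝ} (ht : 1 ≤ t) (h : t ≤ 2 ^ φ) :
    10 * n * Real.log t ≤ (7 * n * φ : ℕ) := by
  have hlog : Real.log t ≤ φ * Real.log 2 := by
    rw [← Real.log_pow]
    exact Real.log_le_log (by linarith) h
  calc 10 * n * Real.log t ≤ 10 * n * (φ * 0.7) := by
        gcongr
        exact hlog.trans (by gcongr; linarith [Real.log_two_lt_d9])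
    _ = (7 * n * φ : ℕ) := by push_cast; ring

theorem add_two_mul_pow_le {φ : ℕ} (hφ : 1 ≤ φ) (n : ℕ) :
    (n + 2) * (2 * (7 * n * φ) + 1) ^ n ≤ 2 * (12 * (n + 1) ^ 2 * φ) ^ n := by
  have hexp : n + 2 ≤ 2 * 2 ^ n := by
    have := n.lt_two_pow_self
    omega
  have hbase : 2 * (2 * (7 * n * φ) + 1) ≤ 12 * (n + 1) ^ 2 * φ := by
    nlinarith [sq_nonneg ((n : ℤ) - 1)]
  calc (n + 2) * (2 * (7 * n * φ) + 1) ^ n ≤ 2 * 2 ^ n * (2 * (7 * n * φ) + 1) ^ n := by gcongr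
    _ = 2 * (2 * (2 * (7 * n * φ) + 1)) ^ n := by rw [mul_pow 2 (2 * (7 * n * φ) + 1)]; ring
    _ ≤ 2 * (12 * (n + 1) ^ 2 * φ) ^ n := by gcongr

end Bound

theorem numVertices_integerHull_polyhedron_slack_le {n m : ℕ} {a : Fin m → Fin (n + 1) → ℤ}
    {b : Fin m → ℤ} (hK : Bornology.IsBounded (polyhedron (slack a b))) :
    numVertices (n + 1) (integerHull (n + 1) (polyhedron (slack a b))) ≤
      (n + 2) * (m ^ (n + 1) * (2 * (7 * n * systemSize (n + 1) m a b) + 1) ^ n) := by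
  set vertices := extremePoints ℝ (integerHull (n + 1) (polyhedron (slack a b)))
  have hsub : vertices ⊆ intPoints (n + 1) ∩ polyhedron (slack a b) :=
    extremePoints_convexHull_subset
  have hfin : vertices.Finite := (finite_intPoints_inter hK).subset hsub
  rw [numVertices, ncard_eq_toFinset_card vertices hfin]
  rcases vertices.eq_empty_or_nonempty with hempty | ⟨v, hv⟩
  · simp [hempty]
  have hone (x) (hx : x ∈ vertices) (j : Fin m) : 1 ≤ slack a (b + 1) j x := by
    rw [slack_add_one_apply]
    exact le_add_of_nonneg_left ((hsub hx).2 j)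
  have hlog (x) (hx : x ∈ vertices) (j : Fin m) : 10 * n * Real.log (slack a (b + 1) j x) ≤
      (7 * n * systemSize (n + 1) m a b : ℕ) :=
    ten_mul_log_le (hone x hx j) (slack_add_one_le hK (hsub hx).2 j)
  have hrefl : IsReflectionFree (slack a (b + 1)) (hfin.toFinset : Set (E (n + 1))) := by
    rw [hfin.coe_toFinset]
    exact isReflectionFree_extremePoints_integerHull
  simpa only [Fintype.card_fin] using hrefl.card_le
    (EuclideanSpace.basisFun (Fin (n + 1)) ℝ).toBasis (span_linear_slack_eq_top hK ⟨v, (hsub hv).2⟩)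
    (fun x hx => hone x (hfin.mem_toFinset.mp hx)) fun x hx => hlog x (hfin.mem_toFinset.mp hx)

/-- Cook–Hartman–Kannan–McDiarmid: for a rational polytope `K ⊆ ℝ^d` given by `m` integral
inequalities of total size `φ`, the integer hull has at most `2 m^d (12 d² φ)^{d-1}`
vertices. -/
theorem vertices_of_integer_hull_of_rational_polytope (d m : ℕ) (hd : 1 ≤ d)
    (a : Fin m → Fin d → ℤ) (b : Fin m → ℤ)
    (K : Set (E d)) (hK : K = {x : E d | ∀ j, (∑ i, (a j i : ℝ) * x i) ≤ (b j : ℝ)})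
    (hKb : Bornology.IsBounded K) :
    numVertices d (integerHull d K) ≤
      2 * m ^ d * (12 * d ^ 2 * systemSize d m a b) ^ (d - 1) := by
  obtain ⟨n, rfl⟩ := Nat.exists_eq_add_of_le' hd
  rw [← polyhedron_slack] at hK
  subst hK
  refine (numVertices_integerHull_polyhedron_slack_le hKb).trans ?_
  rcases m.eq_zero_or_pos with rfl | hm
  · simp
  have hφ : 1 ≤ systemSize (n + 1) m a b :=
    (Nat.mul_pos hm (Nat.succ_pos _)).trans_le (mul_add_one_le_systemSize _ _ a b)
  calc (n + 2) * (m ^ (n + 1) * (2 * (7 * n * systemSize (n + 1) m a b) + 1) ^ n)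
      = m ^ (n + 1) * ((n + 2) * (2 * (7 * n * systemSize (n + 1) m a b) + 1) ^ n) :=
        Nat.mul_left_comm _ _ _
    _ ≤ m ^ (n + 1) * (2 * (12 * (n + 1) ^ 2 * systemSize (n + 1) m a b) ^ n) :=
        Nat.mul_le_mul_left _ (add_two_mul_pow_le hφ n)
    _ = 2 * m ^ (n + 1) * (12 * (n + 1) ^ 2 * systemSize (n + 1) m a b) ^ (n + 1 - 1) := by
        rw [Nat.add_sub_cancel]
        ring
end
end

section
/- There are constants 0.3 and 5.5 such that for all sufficiently large r, the number of vertices of the convex hull of the integer points in the disc of radius r centered at the origin satisfies 0.3 · r^{2/3} < f_0(I(rB^2)) < 5.5 · r^{2/3}. -/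
open MeasureTheory Set Filter
noncomputable section

/-!
Let `c = r ^ (1/3)`, and let `A` be the set of lattice points of the disc of radius `c ^ 3`.

Lower bound. For a primitive direction `w` with `c ≤ len w ≤ 2 * c`, the supporting line of `A` to
the right of `w` contains a vertex `v`. The line is so close to the circle that the cotangent of the
angle between `w` and `v` is at most `7 / (4 * c ^ 2)` in absolute value, while the cotangents for
two different such `w` with the same `v` differ by at least `1 / (4 * c ^ 2)`. Hence a vertex serves
at most 15 directions, and there are about `18 / π * c ^ 2` of them.

Upper bound. The perimeter of the polygon is at most `2 * π * c ^ 3`, and its edges have distinct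
primitive directions. If every primitive vector of length at most `1.7 * c` were the direction of
an edge, this would only just fail to give the constant 5.5. But an edge in a direction of length at
most `0.2 * c` is a large multiple of its direction or is followed by an edge whose direction is
long, because the chord on the next parallel lattice line is much longer; this excess or the absence
of the short directions saves a further `0.95 * c` for each of them.
-/

section Lattice

/-- The determinant `det (w, p)`, as a linear form in `p`: `len w` times the signed height of `p`
over the line `ℝw`. -/
def detForm (w : ℤ × ℤ) : ℤ × ℤ →ₗ[ℤ] ℤ :=
  w.1 • LinearMap.snd ℤ ℤ ℤ - w.2 • LinearMap.fst ℤ ℤ ℤ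

/-- The scalar product `⟨w, p⟩`, as a linear form in `p`. -/
def dotForm (w : ℤ × ℤ) : ℤ × ℤ →ₗ[ℤ] ℤ :=
  w.1 • LinearMap.fst ℤ ℤ ℤ + w.2 • LinearMap.snd ℤ ℤ ℤ

/-- The real linear form with coefficients `a` and `b`, restricted to the lattice. -/
def linForm (a b : ℝ) : ℤ × ℤ →ₗ[ℤ] ℝ :=
  (LinearMap.toSpanSingleton ℤ ℝ a).comp (LinearMap.fst ℤ ℤ ℤ) +
    (LinearMap.toSpanSingleton ℤ ℝ b).comp (LinearMap.snd ℤ ℤ ℤ)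

/-- The Euclidean length of a lattice vector. -/
def len (w : ℤ × ℤ) : ℝ := √(dotForm w w)

variable {w p q : ℤ × ℤ}

lemma detForm_apply (w p : ℤ × ℤ) : detForm w p = w.1 * p.2 - w.2 * p.1 := by simp [detForm]

lemma dotForm_apply (w p : ℤ × ℤ) : dotForm w p = w.1 * p.1 + w.2 * p.2 := by simp [dotForm]

lemma linForm_apply (a b : ℝ) (p : ℤ × ℤ) : linForm a b p = a * p.1 + b * p.2 := by
  simp [linForm, mul_comm]

lemma detForm_self (w : ℤ × ℤ) : detForm w w = 0 := by rw [detForm_apply]; ring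

lemma detForm_swap (w p : ℤ × ℤ) : detForm p w = -detForm w p := by
  simp only [detForm_apply]; ring

lemma detForm_neg_left (w p : ℤ × ℤ) : detForm (-w) p = -detForm w p := by
  rw [detForm_swap, map_neg, neg_neg, detForm_swap]

lemma dotForm_comm (w p : ℤ × ℤ) : dotForm w p = dotForm p w := by
  simp only [dotForm_apply]; ring

lemma detForm_add_smul_self (w p : ℤ × ℤ) (k : ℤ) : detForm w (p + k • w) = detForm w p := by
  rw [map_add, map_zsmul, detForm_self, smul_zero, add_zero]

lemma detForm_sq_add_dotForm_sq (w p : ℤ × ℤ) :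
    detForm w p ^ 2 + dotForm w p ^ 2 = dotForm w w * dotForm p p := by
  simp only [detForm_apply, dotForm_apply]; ring

/-- Plücker relation between three lattice vectors, evaluated by a linear form. -/
lemma linForm_plucker (a b : ℝ) (p q s : ℤ × ℤ) :
    linForm a b p * detForm q s + linForm a b q * detForm s p + linForm a b s * detForm p q
      = 0 := by
  simp only [linForm_apply, detForm_apply]; push_cast; ring

lemma dotForm_self_mul_detForm (w p q : ℤ × ℤ) :
    dotForm w w * detForm p q = dotForm w p * detForm w q - detForm w p * dotForm w q := by
  simp only [detForm_apply, dotForm_apply]; ring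

lemma dotForm_self_pos (hw : w ≠ 0) : 0 < dotForm w w := by
  rw [dotForm_apply]
  by_contra! h
  exact hw (Prod.ext (by nlinarith [mul_self_nonneg w.1, mul_self_nonneg w.2] : w.1 = 0)
    (by nlinarith [mul_self_nonneg w.1, mul_self_nonneg w.2] : w.2 = 0))

lemma dotForm_self_nonneg (w : ℤ × ℤ) : 0 ≤ dotForm w w := by
  rw [dotForm_apply]; exact add_nonneg (mul_self_nonneg _) (mul_self_nonneg _)

lemma eq_zero_of_detForm_eq_zero_of_dotForm_eq_zero (hw : w ≠ 0) (hc : detForm w p = 0)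
    (hd : dotForm w p = 0) : p = 0 := by
  by_contra hp
  have := detForm_sq_add_dotForm_sq w p
  rw [hc, hd] at this
  nlinarith [mul_pos (dotForm_self_pos hw) (dotForm_self_pos hp)]

lemma len_nonneg (w : ℤ × ℤ) : 0 ≤ len w := Real.sqrt_nonneg _

lemma len_sq (w : ℤ × ℤ) : len w ^ 2 = dotForm w w :=
  Real.sq_sqrt (mod_cast dotForm_self_nonneg w)

lemma dotForm_add_smul_self (w p : ℤ × ℤ) (k : ℤ) :
    (dotForm w (p + k • w) : ℝ) = dotForm w p + k * len w ^ 2 := by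
  rw [map_add, map_zsmul, smul_eq_mul, len_sq]; push_cast; rfl

lemma one_le_len (hw : w ≠ 0) : 1 ≤ len w :=
  Real.one_le_sqrt.2 (mod_cast dotForm_self_pos hw)

lemma len_smul (k : ℤ) (w : ℤ × ℤ) : len (k • w) = |(k : ℝ)| * len w := by
  have h : ((dotForm (k • w) (k • w) : ℤ) : ℝ) = (k : ℝ) ^ 2 * (dotForm w w : ℤ) := by
    simp only [dotForm_apply, Prod.smul_fst, Prod.smul_snd, smul_eq_mul]; push_cast; ring
  rw [len, h, Real.sqrt_mul (sq_nonneg _), Real.sqrt_sq_eq_abs, len]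

lemma detForm_sq_add_dotForm_sq_real (w p : ℤ × ℤ) :
    (detForm w p : ℝ) ^ 2 + (dotForm w p : ℝ) ^ 2 = (len w * len p) ^ 2 := by
  rw [mul_pow, len_sq, len_sq]; exact_mod_cast detForm_sq_add_dotForm_sq w p

lemma abs_detForm_le (w p : ℤ × ℤ) : |(detForm w p : ℝ)| ≤ len w * len p :=
  abs_le_of_sq_le_sq (by linarith [detForm_sq_add_dotForm_sq_real w p, sq_nonneg (dotForm w p : ℝ)])
    (mul_nonneg (len_nonneg w) (len_nonneg p))

lemma abs_dotForm_le (w p : ℤ × ℤ) : |(dotForm w p : ℝ)| ≤ len w * len p :=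
  abs_le_of_sq_le_sq (by linarith [detForm_sq_add_dotForm_sq_real w p, sq_nonneg (detForm w p : ℝ)])
    (mul_nonneg (len_nonneg w) (len_nonneg p))

/-- A lattice vector that is not a proper multiple of another one. -/
def IsPrimitive (w : ℤ × ℤ) : Prop := IsCoprime w.1 w.2

lemma IsPrimitive.ne_zero (hw : IsPrimitive w) : w ≠ 0 := by
  rintro rfl
  exact not_isCoprime_zero_zero hw

lemma IsPrimitive.exists_detForm_eq (hw : IsPrimitive w) (k : ℤ) : ∃ q, detForm w q = k := by
  obtain ⟨x, y, h⟩ := hw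
  exact ⟨(-(k * y), k * x), by rw [detForm_apply]; linear_combination k * h⟩

lemma IsPrimitive.exists_eq_smul (hw : IsPrimitive w) (h : detForm w q = 0) :
    ∃ k : ℤ, q = k • w := by
  obtain ⟨x, y, hxy⟩ := hw
  rw [detForm_apply] at h
  refine ⟨x * q.1 + y * q.2, Prod.ext ?_ ?_⟩ <;>
    simp only [Prod.smul_fst, Prod.smul_snd, smul_eq_mul]
  · linear_combination (-q.1) * hxy - y * h
  · linear_combination (-q.2) * hxy + x * h

lemma IsPrimitive.eq_or_eq_neg (hw : IsPrimitive w) (hq : IsPrimitive q) (h : detForm w q = 0) :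
    q = w ∨ q = -w := by
  obtain ⟨k, rfl⟩ := hw.exists_eq_smul h
  have hk : IsUnit k := hq.isUnit_of_dvd' (dvd_mul_right k w.1) (dvd_mul_right k w.2)
  rcases Int.isUnit_iff.1 hk with rfl | rfl
  · exact .inl (one_smul ℤ w)
  · exact .inr (neg_one_smul ℤ w)

lemma exists_isPrimitive_smul_eq (hp : p ≠ 0) :
    ∃ w, ∃ g : ℕ, IsPrimitive w ∧ 0 < g ∧ p = g • w := by
  have hg : 0 < Int.gcd p.1 p.2 := by
    rw [Int.gcd_pos_iff]
    by_contra! h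
    exact hp (Prod.ext h.1 h.2)
  obtain ⟨a, b, hab, h₁, h₂⟩ := Int.exists_gcd_one hg
  refine ⟨(a, b), Int.gcd p.1 p.2, Int.isCoprime_iff_gcd_eq_one.2 hab, hg, Prod.ext ?_ ?_⟩
  · simpa [mul_comm] using h₁
  · simpa [mul_comm] using h₂

end Lattice

section LatticeDisc

open scoped Pointwise

variable {x : ℝ} {p : ℤ × ℤ}

lemma abs_fst_le_len (p : ℤ × ℤ) : |(p.1 : ℝ)| ≤ len p := by
  refine Real.abs_le_sqrt ?_
  rw [dotForm_apply]; push_cast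
  linarith [mul_self_nonneg (p.2 : ℝ), sq (p.1 : ℝ)]

lemma abs_snd_le_len (p : ℤ × ℤ) : |(p.2 : ℝ)| ≤ len p := by
  refine Real.abs_le_sqrt ?_
  rw [dotForm_apply]; push_cast
  linarith [mul_self_nonneg (p.1 : ℝ), sq (p.2 : ℝ)]

open scoped Classical in
/-- The lattice points of the disc of radius `x` about the origin. -/
def latticeDisc (x : ℝ) : Finset (ℤ × ℤ) :=
  (Finset.Icc (-⌊x⌋) ⌊x⌋ ×ˢ Finset.Icc (-⌊x⌋) ⌊x⌋).filter (len · ≤ x)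

lemma mem_latticeDisc : p ∈ latticeDisc x ↔ len p ≤ x := by
  have mem_Icc {a : ℤ} (ha : |(a : ℝ)| ≤ x) : a ∈ Finset.Icc (-⌊x⌋) ⌊x⌋ := by
    obtain ⟨h₁, h₂⟩ := abs_le.1 ha
    exact Finset.mem_Icc.2 ⟨neg_le.1 (Int.le_floor.2 (by push_cast; linarith)), Int.le_floor.2 h₂⟩
  rw [latticeDisc, Finset.mem_filter, Finset.mem_product, and_iff_right_iff_imp]
  exact fun h => ⟨mem_Icc ((abs_fst_le_len p).trans h), mem_Icc ((abs_snd_le_len p).trans h)⟩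

lemma card_latticeDisc_le (hx : 1 ≤ x) : ((latticeDisc x).card : ℝ) ≤ 9 * x ^ 2 := by
  have hfloor : (1 : ℝ) ≤ ⌊x⌋ := mod_cast Int.le_floor.2 (by simpa using hx)
  have hcard : ((Finset.Icc (-⌊x⌋) ⌊x⌋).card : ℝ) = 2 * ⌊x⌋ + 1 := by
    have : ((Finset.Icc (-⌊x⌋) ⌊x⌋).card : ℤ) = 2 * ⌊x⌋ + 1 := by
      have : (1 : ℤ) ≤ ⌊x⌋ := mod_cast hfloor
      rw [Int.card_Icc, Int.toNat_of_nonneg (by linarith)]; ring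
    exact_mod_cast this
  calc ((latticeDisc x).card : ℝ)
      ≤ ((Finset.Icc (-⌊x⌋) ⌊x⌋ ×ˢ Finset.Icc (-⌊x⌋) ⌊x⌋).card : ℝ) :=
        mod_cast Finset.card_filter_le _ _
    _ = (2 * ⌊x⌋ + 1) ^ 2 := by rw [Finset.card_product, Nat.cast_mul, hcard, sq]
    _ ≤ (3 * x) ^ 2 := by gcongr; linarith [Int.floor_le x]
    _ = 9 * x ^ 2 := by ring

/-- The embedding of the lattice `ℤ × ℤ` into the Euclidean plane. -/
def latticePoint (p : ℤ × ℤ) : E 2 := !₂[(p.1 : ℝ), (p.2 : ℝ)]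

lemma latticePoint_injective : Function.Injective latticePoint := fun p q h =>
  Prod.ext (by simpa [latticePoint] using congrArg (· 0) h)
    (by simpa [latticePoint] using congrArg (· 1) h)

lemma norm_latticePoint (p : ℤ × ℤ) : ‖latticePoint p‖ = len p := by
  rw [EuclideanSpace.norm_eq, len, dotForm_apply]
  simp [latticePoint, Fin.sum_univ_two, sq]

lemma intPoints_inter_closedBall (x : ℝ) :
    intPoints 2 ∩ Metric.closedBall 0 x = latticePoint '' latticeDisc x := by
  have hrange : intPoints 2 = range latticePoint := by
    ext v
    simp only [intPoints, Fin.forall_fin_two, mem_ofPred_eq, mem_range, Prod.exists]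
    constructor
    · rintro ⟨⟨a, ha⟩, b, hb⟩
      exact ⟨a, b, by ext i; fin_cases i <;> simp [latticePoint, ha, hb]⟩
    · rintro ⟨a, b, rfl⟩
      exact ⟨⟨a, rfl⟩, b, rfl⟩
  rw [hrange, inter_comm, ← image_preimage_eq_inter_range]
  congr 1
  ext p
  simp [norm_latticePoint, mem_latticeDisc]

/-- The unit disc in the coordinate space `Fin 2 → ℝ`, whose own norm is the sup norm. -/
def unitDisc : Set (Fin 2 → ℝ) := WithLp.toLp 2 ⁻¹' (Metric.closedBall (0 : E 2) 1)

lemma volume_real_unitDisc : volume.real unitDisc = Real.pi := by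
  rw [Measure.real, unitDisc, (PiLp.volume_preserving_toLp (Fin 2)).measure_preimage
    measurableSet_closedBall.nullMeasurableSet]
  simp [Real.pi_pos.le]

lemma tendsto_card_inter_unitDisc :
    Tendsto (fun x : ℝ => (Nat.card (unitDisc ∩
      x⁻¹ • (Submodule.span ℤ (range (Pi.basisFun ℝ (Fin 2))) : Set (Fin 2 → ℝ)) :
        Set (Fin 2 → ℝ)) : ℝ) / x ^ 2) atTop (nhds Real.pi) := by
  have hconv : Convex ℝ unitDisc :=
    (convex_closedBall _ _).is_linear_preimage (f := WithLp.toLp 2) ⟨fun _ _ => rfl, fun _ _ => rfl⟩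
  have hbdd : Bornology.IsBounded unitDisc := by
    refine (PiLp.lipschitzWith_ofLp 2 fun _ : Fin 2 => ℝ).isBounded_image
      (Metric.isBounded_closedBall (x := 0) (r := 1)) |>.subset fun v hv =>
        ⟨WithLp.toLp 2 v, hv, rfl⟩
  have hmeas : MeasurableSet unitDisc :=
    (PiLp.volume_preserving_toLp (Fin 2)).measurable measurableSet_closedBall
  have hbal : Balanced ℝ unitDisc := by
    rintro a ha _ ⟨v, hv, rfl⟩
    exact balanced_closedBall_zero a ha (smul_mem_smul_set hv)
  rw [← volume_real_unitDisc]
  refine tendsto_card_div_pow_atTop_volume' unitDisc hbdd hmeas (hconv.addHaar_frontier volume)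
    fun a b ha hab => hbal.smul_mono ?_
  rwa [Real.norm_of_nonneg ha.le, Real.norm_of_nonneg (ha.le.trans hab)]

lemma unitDisc_inter_smul_lattice (hx : 0 < x) :
    unitDisc ∩ x⁻¹ • (Submodule.span ℤ (range (Pi.basisFun ℝ (Fin 2))) : Set (Fin 2 → ℝ))
      = (fun p => x⁻¹ • (latticePoint p).ofLp) '' latticeDisc x := by
  ext v
  have hmem : v ∈ unitDisc ∩ x⁻¹ •
      (Submodule.span ℤ (range (Pi.basisFun ℝ (Fin 2))) : Set (Fin 2 → ℝ)) ↔
      WithLp.toLp 2 (x • v) ∈ intPoints 2 ∩ Metric.closedBall 0 x := by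
    rw [mem_inter_iff, mem_inter_iff, and_comm, mem_smul_set_iff_inv_smul_mem₀ (inv_ne_zero hx.ne'),
      inv_inv, SetLike.mem_coe, Module.Basis.mem_span_iff_repr_mem]
    refine and_congr (forall_congr' fun i => ?_) ?_
    · simp [eq_comm]
    · simp only [unitDisc, mem_preimage, mem_closedBall_zero_iff, WithLp.toLp_smul, norm_smul,
        Real.norm_of_nonneg hx.le]
      exact (mul_le_iff_le_one_right hx).symm
  rw [hmem, intPoints_inter_closedBall]
  refine exists_congr fun p => and_congr_right fun _ => ?_
  rw [inv_smul_eq_iff₀ hx.ne']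
  exact ⟨fun h => congrArg WithLp.ofLp h, fun h => congrArg (WithLp.toLp 2) h⟩

/-- The Gauss circle problem, to leading order. -/
lemma tendsto_card_latticeDisc :
    Tendsto (fun x : ℝ => ((latticeDisc x).card : ℝ) / x ^ 2) atTop (nhds Real.pi) := by
  refine tendsto_card_inter_unitDisc.congr' ?_
  filter_upwards [eventually_gt_atTop 0] with x hx
  rw [unitDisc_inter_smul_lattice hx, Nat.card_image_of_injective]
  · simp
  · exact (smul_right_injective _ (inv_ne_zero hx.ne')).comp
      ((WithLp.ofLp_injective 2).comp latticePoint_injective)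

end LatticeDisc

section PrimitiveCount

open ArithmeticFunction

variable {x : ℝ} {p w : ℤ × ℤ} {d : ℕ}

/-- The nonzero lattice points of the disc of radius `x` about the origin. -/
def nonzeroDisc (x : ℝ) : Finset (ℤ × ℤ) := (latticeDisc x).erase 0

open scoped Classical in
/-- The primitive lattice vectors of length at most `x`. -/
def primDisc (x : ℝ) : Finset (ℤ × ℤ) := (latticeDisc x).filter IsPrimitive

lemma mem_nonzeroDisc : p ∈ nonzeroDisc x ↔ p ≠ 0 ∧ len p ≤ x := by
  rw [nonzeroDisc, Finset.mem_erase, mem_latticeDisc]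

lemma mem_primDisc : w ∈ primDisc x ↔ IsPrimitive w ∧ len w ≤ x := by
  simp only [primDisc, Finset.mem_filter, mem_latticeDisc, and_comm]

lemma nonzeroDisc_eq_empty (hx : x < 1) : nonzeroDisc x = ∅ := by
  refine Finset.eq_empty_of_forall_notMem fun p hp => ?_
  obtain ⟨h₀, h⟩ := mem_nonzeroDisc.1 hp
  linarith [one_le_len h₀]

lemma card_nonzeroDisc_le (x : ℝ) : ((nonzeroDisc x).card : ℝ) ≤ 9 * x ^ 2 := by
  rcases lt_or_ge x 1 with hx | hx
  · rw [nonzeroDisc_eq_empty hx, Finset.card_empty, Nat.cast_zero]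
    positivity
  · exact le_trans (mod_cast Finset.card_erase_le) (card_latticeDisc_le hx)

lemma primDisc_subset_nonzeroDisc (x : ℝ) : primDisc x ⊆ nonzeroDisc x := fun _ hw =>
  have ⟨hprim, hlen⟩ := mem_primDisc.1 hw
  mem_nonzeroDisc.2 ⟨hprim.ne_zero, hlen⟩

lemma card_primDisc_le (x : ℝ) : ((primDisc x).card : ℝ) ≤ 9 * x ^ 2 :=
  le_trans (mod_cast Finset.card_le_card (primDisc_subset_nonzeroDisc x)) (card_nonzeroDisc_le x)

lemma tendsto_card_nonzeroDisc :
    Tendsto (fun x : ℝ => ((nonzeroDisc x).card : ℝ) / x ^ 2) atTop (nhds Real.pi) := by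
  have hinv : Tendsto (fun x : ℝ => (x ^ 2)⁻¹) atTop (nhds 0) :=
    (tendsto_pow_atTop two_ne_zero).inv_tendsto_atTop
  have hlim := tendsto_card_latticeDisc.sub hinv
  rw [sub_zero] at hlim
  refine hlim.congr' ?_
  filter_upwards [eventually_ge_atTop 0] with x hx
  have h₀ : (0 : ℤ × ℤ) ∈ latticeDisc x := mem_latticeDisc.2 (by simpa [len] using hx)
  rw [nonzeroDisc, Finset.cast_card_erase_of_mem h₀]
  ring

lemma dvd_gcd_iff_exists_smul : d ∣ Int.gcd p.1 p.2 ↔ ∃ q, p = (d : ℤ) • q := by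
  rw [Int.dvd_gcd_iff]
  constructor
  · rintro ⟨⟨a, ha⟩, b, hb⟩
    exact ⟨(a, b), Prod.ext ha hb⟩
  · rintro ⟨q, rfl⟩
    exact ⟨dvd_mul_right _ _, dvd_mul_right _ _⟩

lemma le_len_of_dvd_gcd (hp : p ≠ 0) (h : d ∣ Int.gcd p.1 p.2) : (d : ℝ) ≤ len p := by
  obtain ⟨q, rfl⟩ := dvd_gcd_iff_exists_smul.1 h
  rw [len_smul, Int.cast_natCast, Nat.abs_cast]
  exact le_mul_of_one_le_right (Nat.cast_nonneg d) (one_le_len (right_ne_zero_of_smul hp))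

lemma card_filter_dvd_gcd (hd : 0 < d) (x : ℝ) :
    ((nonzeroDisc x).filter fun p => d ∣ Int.gcd p.1 p.2).card = (nonzeroDisc (x / d)).card := by
  have hd' : (0 : ℝ) < d := Nat.cast_pos.2 hd
  have hdZ : (d : ℤ) ≠ 0 := Nat.cast_ne_zero.2 hd.ne'
  rw [← Finset.card_image_of_injective (nonzeroDisc (x / d))
    (smul_right_injective (ℤ × ℤ) hdZ)]
  congr 1
  ext p
  simp only [Finset.mem_filter, Finset.mem_image, dvd_gcd_iff_exists_smul]
  have hmem (q : ℤ × ℤ) : (d : ℤ) • q ∈ nonzeroDisc x ↔ q ∈ nonzeroDisc (x / d) := by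
    rw [mem_nonzeroDisc, mem_nonzeroDisc, len_smul, Int.cast_natCast, Nat.abs_cast,
      le_div_iff₀' hd', Ne, smul_eq_zero_iff_right hdZ]
  constructor
  · rintro ⟨hp, q, rfl⟩
    exact ⟨q, (hmem q).1 hp, rfl⟩
  · rintro ⟨q, hq, rfl⟩
    exact ⟨(hmem q).2 hq, q, rfl⟩

lemma sum_moebius_dvd {n D : ℕ} (hn : 0 < n) (hD : n ≤ D) :
    ∑ d ∈ (Finset.Icc 1 D).filter (· ∣ n), moebius d = if n = 1 then 1 else 0 := by
  have hdiv : (Finset.Icc 1 D).filter (· ∣ n) = n.divisors := by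
    ext d
    simp only [Finset.mem_filter, Finset.mem_Icc, Nat.mem_divisors]
    exact ⟨fun h => ⟨h.2, hn.ne'⟩,
      fun h => ⟨⟨Nat.pos_of_dvd_of_pos h.1 hn, (Nat.le_of_dvd hn h.1).trans hD⟩, h.1⟩⟩
  rw [hdiv, ← coe_mul_zeta_apply, moebius_mul_coe_zeta, one_apply]

lemma card_primDisc_eq_sum {D : ℕ} (hD : x ≤ D) :
    ((primDisc x).card : ℤ) =
      ∑ d ∈ Finset.Icc 1 D, moebius d * ((nonzeroDisc (x / d)).card : ℤ) := by
  have hprim : primDisc x = (nonzeroDisc x).filter fun p => Int.gcd p.1 p.2 = 1 := by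
    ext p
    rw [Finset.mem_filter, mem_primDisc, mem_nonzeroDisc, ← Int.isCoprime_iff_gcd_eq_one]
    exact ⟨fun h => ⟨⟨h.1.ne_zero, h.2⟩, h.1⟩, fun h => ⟨h.2, h.1.2⟩⟩
  have hind : ∀ p ∈ nonzeroDisc x, (if Int.gcd p.1 p.2 = 1 then (1 : ℤ) else 0) =
      ∑ d ∈ Finset.Icc 1 D, if d ∣ Int.gcd p.1 p.2 then moebius d else 0 := by
    intro p hp
    obtain ⟨hp₀, hpx⟩ := mem_nonzeroDisc.1 hp
    rw [← Finset.sum_filter, sum_moebius_dvd (Nat.pos_of_ne_zero fun h => ?_)]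
    · exact_mod_cast (le_len_of_dvd_gcd hp₀ dvd_rfl).trans (hpx.trans hD)
    · rw [Int.gcd_eq_zero_iff] at h
      exact hp₀ (Prod.ext h.1 h.2)
  calc ((primDisc x).card : ℤ)
      = ∑ p ∈ nonzeroDisc x, if Int.gcd p.1 p.2 = 1 then (1 : ℤ) else 0 := by
        rw [hprim, Finset.natCast_card_filter]
    _ = ∑ d ∈ Finset.Icc 1 D, ∑ p ∈ nonzeroDisc x,
          if d ∣ Int.gcd p.1 p.2 then moebius d else 0 := by
        rw [Finset.sum_congr rfl hind, Finset.sum_comm]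
    _ = _ := Finset.sum_congr rfl fun d hd => by
        rw [← Finset.sum_filter, Finset.sum_const, card_filter_dvd_gcd (Finset.mem_Icc.1 hd).1,
          nsmul_eq_mul, mul_comm]

lemma tsum_moebius_div_sq : ∑' d : ℕ, (moebius d : ℝ) * (1 / (d : ℝ) ^ 2) = 6 / Real.pi ^ 2 := by
  have hseries : LSeries (fun n => (moebius n : ℂ)) 2 =
      ((∑' d : ℕ, (moebius d : ℝ) * (1 / (d : ℝ) ^ 2) : ℝ) : ℂ) := by
    rw [Complex.ofReal_tsum, LSeries]
    congr 1
    ext d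
    rcases eq_or_ne d 0 with rfl | hd
    · simp
    · rw [LSeries.term_of_ne_zero hd]
      push_cast
      rw [show (2 : ℂ) = ((2 : ℕ) : ℂ) by norm_num, Complex.cpow_natCast]
      ring
  have hmul := LSeries_zeta_mul_Lseries_moebius (s := 2) (by norm_num)
  rw [LSeries_zeta_eq_riemannZeta (by norm_num), riemannZeta_two, hseries] at hmul
  have hmul' : Real.pi ^ 2 / 6 * ∑' d : ℕ, (moebius d : ℝ) * (1 / (d : ℝ) ^ 2) = 1 := by
    exact_mod_cast hmul
  rw [eq_div_iff (by positivity)]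
  linarith

lemma card_primDisc_div_sq_eq_tsum (x : ℝ) : ((primDisc x).card : ℝ) / x ^ 2 =
    ∑' d : ℕ, (moebius d : ℝ) * (((nonzeroDisc (x / d)).card : ℝ) / x ^ 2) := by
  obtain ⟨D, hD⟩ := exists_nat_gt x
  rw [tsum_eq_sum (s := Finset.Icc 1 D)]
  · have hcard : ((primDisc x).card : ℝ) =
        ∑ d ∈ Finset.Icc 1 D, (moebius d : ℝ) * ((nonzeroDisc (x / d)).card : ℝ) := by
      exact_mod_cast congrArg (Int.cast : ℤ → ℝ) (card_primDisc_eq_sum hD.le)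
    rw [hcard, Finset.sum_div]
    exact Finset.sum_congr rfl fun d _ => mul_div_assoc _ _ _
  · intro d hd
    rcases Nat.eq_zero_or_pos d with rfl | hd₀
    · simp
    · have hDd : D < d := by simpa [Nat.one_le_iff_ne_zero.2 hd₀.ne'] using hd
      have hxd : x / d < 1 := (div_lt_one (Nat.cast_pos.2 hd₀)).2 (hD.trans (mod_cast hDd))
      simp [nonzeroDisc_eq_empty hxd]

lemma tendsto_card_primDisc :
    Tendsto (fun x : ℝ => ((primDisc x).card : ℝ) / x ^ 2) atTop (nhds (6 / Real.pi)) := by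
  have hlim : 6 / Real.pi = ∑' d : ℕ, (moebius d : ℝ) * (Real.pi / (d : ℝ) ^ 2) := by
    have hπ : ∀ d : ℕ, (moebius d : ℝ) * (Real.pi / (d : ℝ) ^ 2) =
        Real.pi * ((moebius d : ℝ) * (1 / (d : ℝ) ^ 2)) := fun d => by ring
    simp_rw [hπ]
    rw [tsum_mul_left, tsum_moebius_div_sq]
    field_simp
  have hsummable : Summable fun d : ℕ => 9 * (1 / (d : ℝ) ^ 2) :=
    (Real.summable_one_div_nat_pow.2 one_lt_two).mul_left 9
  rw [hlim]
  refine Tendsto.congr (fun x => (card_primDisc_div_sq_eq_tsum x).symm)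
    (tendsto_tsum_of_dominated_convergence hsummable (fun d => ?_) ?_)
  · rcases Nat.eq_zero_or_pos d with rfl | hd
    · simp
    · have hd' : (0 : ℝ) < d := Nat.cast_pos.2 hd
      have hscaled := (tendsto_card_nonzeroDisc.comp
        (tendsto_id.atTop_div_const hd')).mul_const (1 / (d : ℝ) ^ 2)
      refine Tendsto.const_mul _ (Tendsto.congr' ?_ (by simpa [div_eq_mul_inv] using hscaled))
      filter_upwards [eventually_gt_atTop 0] with x hx
      field_simp
  · filter_upwards [eventually_gt_atTop 0] with x hx d
    have hμ : |(moebius d : ℝ)| ≤ 1 := mod_cast abs_moebius_le_one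
    have hcard : |((nonzeroDisc (x / d)).card : ℝ) / x ^ 2| ≤ 9 * (1 / (d : ℝ) ^ 2) := by
      rw [abs_of_nonneg (by positivity), div_le_iff₀ (by positivity)]
      refine (card_nonzeroDisc_le _).trans (le_of_eq ?_)
      ring
    rw [norm_mul, Real.norm_eq_abs, Real.norm_eq_abs, ← one_mul (9 * (1 / (d : ℝ) ^ 2))]
    gcongr

end PrimitiveCount

section PrimitiveSum

variable {a : ℝ}

lemma primDisc_mono : Monotone primDisc := fun _ _ hxy _ hw =>
  have ⟨hprim, hlen⟩ := mem_primDisc.1 hw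
  mem_primDisc.2 ⟨hprim, hlen.trans hxy⟩

lemma monotone_card_primDisc : Monotone fun x => ((primDisc x).card : ℝ) := fun _ _ hxy =>
  Nat.cast_le.2 (Finset.card_le_card (primDisc_mono hxy))

lemma tendsto_card_primDisc_mul (ha : 0 < a) :
    Tendsto (fun c : ℝ => ((primDisc (a * c)).card : ℝ) / c ^ 2) atTop
      (nhds (6 / Real.pi * a ^ 2)) := by
  refine Tendsto.congr (fun c => ?_)
    ((tendsto_card_primDisc.comp (tendsto_id.const_mul_atTop ha)).mul_const (a ^ 2))
  simp only [Function.comp, id]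
  field_simp

lemma integral_indicator_Ici {b L : ℝ} (hb : 0 < b) (hbL : b ≤ L) :
    ∫ t in (0)..L, (Ici b).indicator (fun _ => (1 : ℝ)) t = L - b := by
  have hinter : Ioc 0 L ∩ Ici b = Icc b L := by
    ext t
    exact ⟨fun h => ⟨h.2, h.1.2⟩, fun h => ⟨⟨hb.trans_le h.1, h.2⟩, h.1⟩⟩
  rw [intervalIntegral.integral_of_le (hb.le.trans hbL), setIntegral_indicator measurableSet_Ici,
    hinter]
  simp [hbL]

lemma sum_primDisc_sub_len {L : ℝ} (hL : 0 ≤ L) :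
    ∑ w ∈ primDisc L, (L - len w) = ∫ t in (0)..L, ((primDisc t).card : ℝ) := by
  have hcard : ∀ t ∈ uIcc 0 L, ((primDisc t).card : ℝ) =
      ∑ w ∈ primDisc L, (Ici (len w)).indicator (fun _ => (1 : ℝ)) t := by
    intro t ht
    rw [uIcc_of_le hL] at ht
    have hfilter : primDisc t = (primDisc L).filter (len · ≤ t) := by
      ext w
      simp only [Finset.mem_filter, mem_primDisc]
      exact ⟨fun h => ⟨⟨h.1, h.2.trans ht.2⟩, h.2⟩, fun h => ⟨h.1.1, h.2⟩⟩
    rw [hfilter, Finset.natCast_card_filter]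
    rfl
  rw [intervalIntegral.integral_congr hcard, intervalIntegral.integral_finsetSum fun w _ => ?_]
  · refine Finset.sum_congr rfl fun w hw => ?_
    obtain ⟨hprim, hlen⟩ := mem_primDisc.1 hw
    exact (integral_indicator_Ici (by linarith [one_le_len hprim.ne_zero]) hlen).symm
  · rw [intervalIntegrable_iff]
    exact (intervalIntegrable_const (c := (1 : ℝ))).def'.indicator measurableSet_Ici

lemma tendsto_sum_primDisc_sub_len (ha : 0 < a) :
    Tendsto (fun c : ℝ => (∑ w ∈ primDisc (a * c), (a * c - len w)) / c ^ 3) atTop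
      (nhds (2 / Real.pi * a ^ 3)) := by
  have hlim : 2 / Real.pi * a ^ 3 = ∫ s in (0)..a, 6 / Real.pi * s ^ 2 := by
    rw [intervalIntegral.integral_const_mul, integral_pow]
    ring
  have hscale : ∀ᶠ c : ℝ in atTop, ∫ s in (0)..a, ((primDisc (s * c)).card : ℝ) / c ^ 2 =
      (∑ w ∈ primDisc (a * c), (a * c - len w)) / c ^ 3 := by
    filter_upwards [eventually_gt_atTop 0] with c hc
    rw [sum_primDisc_sub_len (by positivity), intervalIntegral.integral_div,
      intervalIntegral.integral_comp_mul_right (fun t => ((primDisc t).card : ℝ)) hc.ne', zero_mul,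
      smul_eq_mul]
    field_simp
  rw [hlim]
  refine Tendsto.congr' hscale (intervalIntegral.tendsto_integral_filter_of_dominated_convergence
    (fun s => 9 * s ^ 2) ?_ ?_
    (Continuous.intervalIntegrable (by fun_prop) 0 a) ?_)
  · filter_upwards [eventually_ge_atTop 0] with c hc
    have hmono : Monotone fun s : ℝ => ((primDisc (s * c)).card : ℝ) / c ^ 2 := fun _ _ h =>
      div_le_div_of_nonneg_right
        (monotone_card_primDisc (mul_le_mul_of_nonneg_right h hc)) (sq_nonneg c)
    exact hmono.measurable.aestronglyMeasurable
  · filter_upwards [eventually_gt_atTop 0] with c hc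
    refine Eventually.of_forall fun s _ => ?_
    rw [Real.norm_of_nonneg (by positivity), div_le_iff₀ (by positivity)]
    exact (card_primDisc_le _).trans_eq (by ring)
  · refine Eventually.of_forall fun s hs => tendsto_card_primDisc_mul ?_
    exact (uIoc_of_le ha.le ▸ hs).1

end PrimitiveSum

section ExtremePoints

variable {F : Type*} [AddCommGroup F] [Module ℝ F] [TopologicalSpace F]

lemma mem_extremePoints_convexHull_of_forall_lt {s : Set F} {v : F} (hv : v ∈ s)
    (f : F →L[ℝ] ℝ) (hf : ∀ y ∈ s, y ≠ v → f v < f y) :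
    v ∈ extremePoints ℝ (convexHull ℝ s) := by
  have hconv : Convex ℝ {y | y = v ∨ f v < f y} := by
    refine convex_iff_forall_pos.2 fun y hy z hz a b ha hb hab => ?_
    have hcomb : f (a • y + b • z) = a * f y + b * f z := by simp
    have hv' : f v = a * f v + b * f v := by rw [← add_mul, hab, one_mul]
    rcases hy with rfl | hy <;> rcases hz with rfl | hz
    · exact .inl (Convex.combo_self hab _)
    all_goals
      refine .inr ?_
      rw [hcomb, hv']
      nlinarith
  have hsub : convexHull ℝ s ⊆ {y | y = v ∨ f v < f y} :=
    convexHull_min (fun y hy => or_iff_not_imp_left.2 (hf y hy)) hconv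
  refine exposedPoints_subset_extremePoints ⟨subset_convexHull ℝ s hv, -f, fun y hy => ?_⟩
  rcases hsub hy with rfl | hlt
  · exact ⟨le_rfl, fun _ => rfl⟩
  · exact ⟨neg_le_neg hlt.le, fun h => absurd hlt (not_lt.2 (neg_le_neg_iff.1 h))⟩

lemma mem_extremePoints_convexHull_iff [IsTopologicalAddGroup F] [ContinuousSMul ℝ F]
    [LocallyConvexSpace ℝ F] [T2Space F] {s : Set F} (hs : s.Finite) {v : F} :
    v ∈ extremePoints ℝ (convexHull ℝ s) ↔
      v ∈ s ∧ ∃ f : F →L[ℝ] ℝ, ∀ y ∈ s, y ≠ v → f v < f y := by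
  refine ⟨fun h => ⟨extremePoints_convexHull_subset h, ?_⟩,
    fun ⟨hv, f, hf⟩ => mem_extremePoints_convexHull_of_forall_lt hv f hf⟩
  rw [(convex_convexHull ℝ s).mem_extremePoints_iff_mem_sdiff_convexHull_sdiff] at h
  have hnot : v ∉ convexHull ℝ (s \ {v}) := fun hmem =>
    h.2 (convexHull_mono (sdiff_subset_sdiff_left (subset_convexHull ℝ s)) hmem)
  obtain ⟨f, u, hfu, hu⟩ := geometric_hahn_banach_point_closed (convex_convexHull ℝ (s \ {v}))
    (hs.sdiff.isClosed_convexHull ℝ) hnot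
  exact ⟨f, fun y hy hne => hfu.trans (hu y (subset_convexHull ℝ _ ⟨hy, hne⟩))⟩

end ExtremePoints

section Vertices

variable {A : Finset (ℤ × ℤ)} {v : ℤ × ℤ}

/-- `v` is a vertex of the lattice polygon `conv A`, expressed by a linear form which attains its
minimum over `A` only at `v`. -/
def IsVertex (A : Finset (ℤ × ℤ)) (v : ℤ × ℤ) : Prop :=
  v ∈ A ∧ ∃ a b : ℝ, ∀ p ∈ A, p ≠ v → linForm a b v < linForm a b p

open scoped Classical in
/-- The vertices of the lattice polygon `conv A`. -/
def vertices (A : Finset (ℤ × ℤ)) : Finset (ℤ × ℤ) := A.filter (IsVertex A)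

lemma mem_vertices : v ∈ vertices A ↔ IsVertex A v := by
  simp only [vertices, Finset.mem_filter, and_iff_right_iff_imp]
  exact And.left

lemma exists_apply_latticePoint_eq_linForm (f : E 2 →L[ℝ] ℝ) :
    ∃ a b : ℝ, ∀ p, f (latticePoint p) = linForm a b p := by
  refine ⟨f !₂[1, 0], f !₂[0, 1], fun p => ?_⟩
  have hp : latticePoint p = (p.1 : ℝ) • !₂[(1 : ℝ), 0] + (p.2 : ℝ) • !₂[(0 : ℝ), 1] := by
    ext i; fin_cases i <;> simp [latticePoint]
  rw [hp, map_add, map_smul, map_smul, smul_eq_mul, smul_eq_mul, linForm_apply, mul_comm,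
    mul_comm (p.2 : ℝ)]

lemma exists_continuousLinearMap_eq_linForm (a b : ℝ) :
    ∃ f : E 2 →L[ℝ] ℝ, ∀ p, f (latticePoint p) = linForm a b p :=
  ⟨a • EuclideanSpace.proj 0 + b • EuclideanSpace.proj 1, fun p => by
    simp [latticePoint, linForm_apply]⟩

lemma latticePoint_mem_extremePoints_iff :
    latticePoint v ∈ extremePoints ℝ (convexHull ℝ (latticePoint '' A)) ↔ IsVertex A v := by
  rw [mem_extremePoints_convexHull_iff (A.finite_toSet.image _),
    latticePoint_injective.mem_set_image, Finset.mem_coe, IsVertex]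
  simp only [forall_mem_image, Finset.mem_coe, latticePoint_injective.ne_iff]
  refine and_congr_right fun _ => ⟨fun ⟨f, hf⟩ => ?_, fun ⟨a, b, h⟩ => ?_⟩
  · obtain ⟨a, b, hab⟩ := exists_apply_latticePoint_eq_linForm f
    exact ⟨a, b, fun p hp hne => hab v ▸ hab p ▸ hf hp hne⟩
  · obtain ⟨f, hf⟩ := exists_continuousLinearMap_eq_linForm a b
    exact ⟨f, fun p hp hne => by rw [hf, hf]; exact h p hp hne⟩

lemma numVertices_convexHull_latticePoint (A : Finset (ℤ × ℤ)) :
    numVertices 2 (convexHull ℝ (latticePoint '' A)) = (vertices A).card := by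
  have hext : extremePoints ℝ (convexHull ℝ (latticePoint '' A)) = latticePoint '' vertices A := by
    ext x
    constructor
    · intro hx
      obtain ⟨v, -, rfl⟩ := extremePoints_convexHull_subset hx
      exact mem_image_of_mem _ (mem_vertices.2 (latticePoint_mem_extremePoints_iff.1 hx))
    · rintro ⟨v, hv, rfl⟩
      exact latticePoint_mem_extremePoints_iff.2 (mem_vertices.1 hv)
  rw [numVertices, hext, ncard_image_of_injective _ latticePoint_injective, ncard_coe_finset]

lemma numVertices_integerHull_closedBall (r : ℝ) :
    numVertices 2 (integerHull 2 (Metric.closedBall 0 r)) = (vertices (latticeDisc r)).card := by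
  rw [integerHull, intPoints_inter_closedBall, numVertices_convexHull_latticePoint]

/-- Tilting a linear form slightly breaks its ties on the finite set `A`. -/
lemma isVertex_of_lex_lt {a b c d : ℝ} (hv : v ∈ A)
    (h : ∀ p ∈ A, p ≠ v → linForm a b v < linForm a b p ∨
      linForm a b v = linForm a b p ∧ linForm c d v < linForm c d p) : IsVertex A v := by
  have hK : ∀ᶠ K : ℝ in atTop, ∀ p ∈ A, p ≠ v →
      K * linForm a b v + linForm c d v < K * linForm a b p + linForm c d p := by
    rw [Finset.eventually_all]
    intro p hp
    by_cases hne : p = v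
    · exact Eventually.of_forall fun _ hne' => absurd hne hne'
    rcases h p hp hne with hlt | ⟨heq, hlt⟩
    · filter_upwards [(tendsto_id.atTop_mul_const (sub_pos.2 hlt)).eventually_gt_atTop
        (linForm c d v - linForm c d p)] with K hK _
      simp only [id, mul_sub] at hK
      linarith
    · exact Eventually.of_forall fun K _ => by rw [heq]; linarith
  obtain ⟨K, hK⟩ := hK.exists
  refine ⟨hv, K * a + c, K * b + d, fun p hp hne => ?_⟩
  have := hK p hp hne
  simp only [linForm_apply] at this ⊢
  linarith

end Vertices

section Faces

variable {A : Finset (ℤ × ℤ)} {v v' w w' : ℤ × ℤ} {m m' : ℤ}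

/-- Among the points of `A` that lie farthest to the right of the direction `w`, the point `v` is
the first one met when moving along `w`. -/
structure IsFaceStart (A : Finset (ℤ × ℤ)) (w v : ℤ × ℤ) : Prop where
  mem : v ∈ A
  detForm_le : ∀ p ∈ A, detForm w v ≤ detForm w p
  dotForm_le : ∀ p ∈ A, detForm w p = detForm w v → dotForm w v ≤ dotForm w p

lemma eq_of_detForm_eq_of_dotForm_eq (hw : w ≠ 0) (hdet : detForm w v = detForm w v')
    (hdot : dotForm w v = dotForm w v') : v = v' :=
  sub_eq_zero.1 (eq_zero_of_detForm_eq_zero_of_dotForm_eq_zero hw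
    (by rw [map_sub, hdet, sub_self]) (by rw [map_sub, hdot, sub_self]))

lemma exists_isFaceStart (hA : A.Nonempty) (w : ℤ × ℤ) : ∃ v, IsFaceStart A w v := by
  obtain ⟨v, hv, hmin⟩ := A.exists_min_image (fun p => toLex (detForm w p, dotForm w p)) hA
  simp only [Prod.Lex.toLex_le_toLex] at hmin
  refine ⟨v, hv, fun p hp => ?_, fun p hp heq => ?_⟩ <;> have := hmin p hp <;> lia

lemma IsFaceStart.unique (hw : w ≠ 0) (h : IsFaceStart A w v) (h' : IsFaceStart A w v') :
    v = v' := by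
  have hdet := (h.detForm_le v' h'.mem).antisymm (h'.detForm_le v h.mem)
  exact eq_of_detForm_eq_of_dotForm_eq hw hdet
    ((h.dotForm_le v' h'.mem hdet.symm).antisymm (h'.dotForm_le v h.mem hdet))

lemma detForm_eq_linForm (w p : ℤ × ℤ) : (detForm w p : ℝ) = linForm (-w.2) w.1 p := by
  rw [detForm_apply, linForm_apply]; push_cast; ring

lemma dotForm_eq_linForm (w p : ℤ × ℤ) : (dotForm w p : ℝ) = linForm w.1 w.2 p := by
  rw [dotForm_apply, linForm_apply]; push_cast; ring

lemma IsFaceStart.isVertex (hw : w ≠ 0) (h : IsFaceStart A w v) : IsVertex A v := by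
  refine isVertex_of_lex_lt (a := -w.2) (b := w.1) (c := w.1) (d := w.2) h.mem fun p hp hne => ?_
  simp only [← detForm_eq_linForm, ← dotForm_eq_linForm, Int.cast_lt, Int.cast_inj]
  refine (h.detForm_le p hp).lt_or_eq.imp_right fun hdet => ⟨hdet, ?_⟩
  exact (h.dotForm_le p hp hdet.symm).lt_of_ne fun hdot =>
    hne (eq_of_detForm_eq_of_dotForm_eq hw hdet hdot).symm

lemma IsFaceStart.exists_max_smul_mem (hw : IsPrimitive w) (h : IsFaceStart A w v) :
    ∃ m : ℤ, v + m • w ∈ A ∧ ∀ k : ℤ, v + k • w ∈ A → k ≤ m := by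
  obtain ⟨e, he, hmax⟩ := (A.filter (detForm w · = detForm w v)).exists_max_image (dotForm w)
    ⟨v, Finset.mem_filter.2 ⟨h.mem, rfl⟩⟩
  obtain ⟨heA, hev⟩ := Finset.mem_filter.1 he
  obtain ⟨m, hm⟩ := hw.exists_eq_smul (q := e - v) (by rw [map_sub, hev, sub_self])
  obtain rfl : e = v + m • w := by rw [← hm, add_sub_cancel]
  refine ⟨m, heA, fun k hk => ?_⟩
  have := hmax _ (Finset.mem_filter.2 ⟨hk, detForm_add_smul_self w v k⟩)
  simp only [map_add, map_zsmul, smul_eq_mul] at this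
  exact le_of_mul_le_mul_right (by linarith) (dotForm_self_pos hw.ne_zero)

/-- The segment from `v` to `v + m • w`, with `w` primitive and `m ≥ 1`, is an edge of the lattice
polygon `conv A`, oriented so that `A` lies to its left; `m` is its lattice length. -/
structure IsHullEdge (A : Finset (ℤ × ℤ)) (v w : ℤ × ℤ) (m : ℤ) : Prop where
  isPrimitive : IsPrimitive w
  one_le : 1 ≤ m
  isFaceStart : IsFaceStart A w v
  end_mem : v + m • w ∈ A
  le_of_mem : ∀ k : ℤ, v + k • w ∈ A → k ≤ m

lemma exists_forall_detForm_nonneg {a b : ℝ}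
    (hab : ∀ p ∈ A, p ≠ v → linForm a b v < linForm a b p) (hA : ∃ q ∈ A, q ≠ v) :
    ∃ q ∈ A, q ≠ v ∧ ∀ p ∈ A, 0 ≤ detForm (q - v) (p - v) := by
  have hpos : ∀ p ∈ A, p ≠ v → 0 < linForm a b (p - v) := fun p hp hne => by
    rw [map_sub]; exact sub_pos.2 (hab p hp hne)
  obtain ⟨q, hq, hmin⟩ := (A.filter (· ≠ v)).exists_min_image
    (fun p => linForm (-b) a (p - v) / linForm a b (p - v))
    (by simpa only [Finset.Nonempty, Finset.mem_filter] using hA)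
  obtain ⟨hqA, hqv⟩ := Finset.mem_filter.1 hq
  refine ⟨q, hqA, hqv, fun p hp => ?_⟩
  by_cases hne : p = v
  · rw [hne, sub_self, map_zero]
  have hslope := hmin p (Finset.mem_filter.2 ⟨hp, hne⟩)
  rw [div_le_div_iff₀ (hpos q hqA hqv) (hpos p hp hne)] at hslope
  have hdet : (a ^ 2 + b ^ 2) * (detForm (q - v) (p - v) : ℝ) =
      linForm (-b) a (p - v) * linForm a b (q - v) -
        linForm (-b) a (q - v) * linForm a b (p - v) := by
    simp only [linForm_apply, detForm_apply]; push_cast; ring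
  have hab₀ : 0 < a ^ 2 + b ^ 2 := by
    by_contra! h
    have ha : a = 0 := by nlinarith [sq_nonneg a, sq_nonneg b]
    have hb : b = 0 := by nlinarith [sq_nonneg a, sq_nonneg b]
    have := hpos q hqA hqv
    simp [linForm_apply, ha, hb] at this
  exact_mod_cast nonneg_of_mul_nonneg_right (hdet ▸ sub_nonneg.2 hslope) hab₀

lemma IsVertex.exists_isHullEdge (hv : IsVertex A v) (hA : ∃ q ∈ A, q ≠ v) :
    ∃ w m, IsHullEdge A v w m := by
  obtain ⟨hvA, a, b, hab⟩ := hv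
  obtain ⟨q, hqA, hqv, hdet⟩ := exists_forall_detForm_nonneg hab hA
  obtain ⟨w, g, hw, hg, hgw⟩ := exists_isPrimitive_smul_eq (sub_ne_zero.2 hqv)
  have hwpos : 0 < linForm a b w := by
    have := sub_pos.2 (hab q hqA hqv)
    rw [← map_sub, hgw, map_nsmul] at this
    exact (nsmul_pos_iff hg.ne').1 this
  have hww := dotForm_self_pos hw.ne_zero
  have hstart : IsFaceStart A w v := by
    refine ⟨hvA, fun p hp => ?_, fun p hp heq => ?_⟩
    · have := hdet p hp
      rw [hgw, detForm_swap, map_nsmul, ← smul_neg, ← detForm_swap] at this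
      exact sub_nonneg.1 (map_sub (detForm w) p v ▸ (nsmul_nonneg_iff hg.ne').1 this)
    · obtain ⟨k, hk⟩ := hw.exists_eq_smul (q := p - v) (by rw [map_sub, heq, sub_self])
      have hlin : 0 ≤ linForm a b (p - v) := by
        rw [map_sub, sub_nonneg]
        exact (eq_or_ne p v).elim (fun h => h ▸ le_rfl) fun h => (hab p hp h).le
      rw [hk, map_zsmul, zsmul_eq_mul] at hlin
      have hk₀ : 0 ≤ k := Int.cast_nonneg_iff.1 (nonneg_of_mul_nonneg_left hlin hwpos)
      rw [← sub_nonneg, ← map_sub, hk, map_zsmul]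
      exact smul_nonneg hk₀ hww.le
  obtain ⟨m, hm, hle⟩ := hstart.exists_max_smul_mem hw
  have hgm := hle g (by rw [natCast_zsmul, ← hgw, add_sub_cancel]; exact hqA)
  exact ⟨w, m, hw, by lia, hstart, hm, hle⟩

namespace IsHullEdge

lemma isVertex_end (h : IsHullEdge A v w m) : IsVertex A (v + m • w) := by
  refine isVertex_of_lex_lt (a := -w.2) (b := w.1) (c := -w.1) (d := -w.2) h.end_mem
    fun p hp hne => ?_
  have hneg (x : ℤ × ℤ) : linForm (-w.1) (-w.2) x = -dotForm w x := by
    rw [dotForm_eq_linForm, linForm_apply, linForm_apply]; ring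
  simp only [← detForm_eq_linForm, hneg, Int.cast_lt, Int.cast_inj, detForm_add_smul_self,
    neg_lt_neg_iff]
  refine (h.isFaceStart.detForm_le p hp).lt_or_eq.imp_right fun hdet => ⟨hdet, ?_⟩
  obtain ⟨k, hk⟩ := h.isPrimitive.exists_eq_smul (q := p - v) (by rw [map_sub, hdet, sub_self])
  obtain rfl : p = v + k • w := by rw [← hk, add_sub_cancel]
  have hkm : k < m := (h.le_of_mem k hp).lt_of_ne fun hkm => hne (by rw [hkm])
  simp only [map_add, map_zsmul, smul_eq_mul]
  gcongr
  exact dotForm_self_pos h.isPrimitive.ne_zero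

lemma start_eq_of_direction_eq (h : IsHullEdge A v w m) (h' : IsHullEdge A v' w m') : v = v' :=
  h.isFaceStart.unique h.isPrimitive.ne_zero h'.isFaceStart

lemma start_eq_of_end_eq (h : IsHullEdge A v w m) (h' : IsHullEdge A v' w' m')
    (hend : v + m • w = v' + m' • w') : v = v' := by
  have hm := h.one_le
  have hm' := h'.one_le
  have hdet : detForm w w' ≤ 0 := by
    have := h.isFaceStart.detForm_le v' h'.isFaceStart.mem
    rw [eq_sub_of_add_eq hend.symm] at this
    simp only [map_sub, map_add, map_zsmul, detForm_self, smul_eq_mul] at this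
    nlinarith
  have hdet' : detForm w' w ≤ 0 := by
    have := h'.isFaceStart.detForm_le v h.isFaceStart.mem
    rw [eq_sub_of_add_eq hend] at this
    simp only [map_sub, map_add, map_zsmul, detForm_self, smul_eq_mul] at this
    nlinarith
  rw [detForm_swap] at hdet'
  rcases h.isPrimitive.eq_or_eq_neg h'.isPrimitive (by lia) with rfl | rfl
  · exact h.start_eq_of_direction_eq h'
  · have hv' : v + (m + m') • w = v' := by
      rw [add_smul, ← add_assoc, hend, smul_neg, neg_add_cancel_right]
    have := h.le_of_mem (m + m') (hv' ▸ h'.isFaceStart.mem)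
    lia

end IsHullEdge

end Faces

section Perimeter

variable {A S : Finset (ℤ × ℤ)} {v v' w w' : ℤ × ℤ} {m m' : ℤ} {a b lo hi r x : ℝ}

lemma affine_nonneg_of_mem_Ioo {y d t T : ℝ} (hy : 0 ≤ y) (hT : 0 ≤ y + T * d)
    (ht : t ∈ Ioo 0 T) : 0 ≤ y + t * d ∧ (y + t * d = 0 → d = 0) := by
  rcases lt_or_ge d 0 with hd | hd
  · have : 0 < y + t * d := by nlinarith [ht.2]
    exact ⟨this.le, fun h => absurd h this.ne'⟩
  · have htd := mul_nonneg ht.1.le hd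
    exact ⟨by positivity, fun h => (mul_eq_zero.1 (by linarith : t * d = 0)).resolve_left ht.1.ne'⟩

lemma linForm_add_zsmul (k : ℤ) (p q : ℤ × ℤ) :
    linForm a b (p + k • q) = linForm a b p + k * linForm a b q := by
  rw [map_add, map_zsmul, zsmul_eq_mul]

lemma exists_mem_Ioo_mul_linForm_eq (hw : 0 < linForm a b w)
    (hx : x ∈ Ioo (linForm a b v) (linForm a b (v + m • w))) :
    ∃ t ∈ Ioo (0 : ℝ) m, t * linForm a b w = x - linForm a b v := by
  rw [linForm_add_zsmul] at hx
  refine ⟨(x - linForm a b v) / linForm a b w, ⟨div_pos (sub_pos.2 hx.1) hw, ?_⟩,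
    div_mul_cancel₀ _ hw.ne'⟩
  rw [div_lt_iff₀ hw]
  linarith [hx.2]

namespace IsHullEdge

lemma detForm_nonneg (h : IsHullEdge A v w m) {p : ℤ × ℤ} (hp : p ∈ A) :
    (0 : ℝ) ≤ detForm w (p - v) := by
  rw [map_sub]; exact_mod_cast sub_nonneg.2 (h.isFaceStart.detForm_le p hp)

lemma affine_detForm_nonneg (h : IsHullEdge A v w m) (h' : IsHullEdge A v' w' m') {t : ℝ}
    (ht : t ∈ Ioo (0 : ℝ) m') :
    0 ≤ (detForm w (v' - v) : ℝ) + t * detForm w w' ∧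
      ((detForm w (v' - v) : ℝ) + t * detForm w w' = 0 → (detForm w w' : ℝ) = 0) := by
  refine affine_nonneg_of_mem_Ioo (h.detForm_nonneg h'.isFaceStart.mem) ?_ ht
  have := h.detForm_nonneg h'.end_mem
  rw [add_sub_right_comm, map_add, map_zsmul, smul_eq_mul] at this
  exact_mod_cast this

lemma start_eq_of_mem_Ioo (h : IsHullEdge A v w m) (h' : IsHullEdge A v' w' m')
    (hw : 0 < linForm a b w) (hw' : 0 < linForm a b w')
    (hx : x ∈ Ioo (linForm a b v) (linForm a b (v + m • w)))
    (hx' : x ∈ Ioo (linForm a b v') (linForm a b (v' + m' • w'))) : v = v' := by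
  obtain ⟨t, ht, htx⟩ := exists_mem_Ioo_mul_linForm_eq hw hx
  obtain ⟨t', ht', htx'⟩ := exists_mem_Ioo_mul_linForm_eq hw' hx'
  obtain ⟨hα, hα₀⟩ := h.affine_detForm_nonneg h' ht'
  obtain ⟨hβ, -⟩ := h'.affine_detForm_nonneg h ht
  set α : ℝ := detForm w (v' - v) + t' * detForm w w'
  set β : ℝ := detForm w' (v - v') + t * detForm w' w with hβ_def
  -- `d = (v' + t' w') - (v + t w)` is killed by the form, so the Plücker relation for `w, w', d`
  -- has only two terms, of opposite signs.
  have hbalance : linForm a b w' * α + linForm a b w * β = 0 := by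
    have hplucker := linForm_plucker a b w w' (v' - v)
    rw [detForm_swap w (v' - v), map_sub (linForm a b)] at hplucker
    rw [hβ_def, ← neg_sub v' v, map_neg, detForm_swap w w']
    push_cast at hplucker ⊢
    linear_combination -hplucker + (detForm w w' : ℝ) * (htx' - htx)
  have hα_zero : α = 0 := by nlinarith [mul_nonneg hw.le hβ]
  rcases h.isPrimitive.eq_or_eq_neg h'.isPrimitive (mod_cast hα₀ hα_zero) with rfl | rfl
  · exact h.start_eq_of_direction_eq h'
  · rw [map_neg] at hw'
    linarith

end IsHullEdge

variable {W : ℤ × ℤ → ℤ × ℤ} {M : ℤ × ℤ → ℤ}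

lemma sum_mul_max_linForm_le (hE : ∀ v ∈ S, IsHullEdge A v (W v) (M v)) (hlohi : lo ≤ hi)
    (hA : ∀ p ∈ A, linForm a b p ∈ Icc lo hi) :
    ∑ v ∈ S, M v * max (linForm a b (W v)) 0 ≤ hi - lo := by
  set T := S.filter fun v => 0 < linForm a b (W v) with hT
  have hTE : ∀ v ∈ T, IsHullEdge A v (W v) (M v) ∧ 0 < linForm a b (W v) := fun v hv =>
    (Finset.mem_filter.1 hv).imp_left (hE v)
  let shadow (v : ℤ × ℤ) : Set ℝ := Ioo (linForm a b v) (linForm a b (v + M v • W v))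
  have hshadow : (⋃ v ∈ T, shadow v) ⊆ Icc lo hi := iUnion₂_subset fun v hv =>
    Ioo_subset_Icc_self.trans (Icc_subset_Icc (hA v (hTE v hv).1.isFaceStart.mem).1
      (hA _ (hTE v hv).1.end_mem).2)
  have hdisj : (T : Set (ℤ × ℤ)).PairwiseDisjoint shadow := fun v hv v' hv' hne =>
    Set.disjoint_left.2 fun x hx hx' => hne <|
      (hTE v hv).1.start_eq_of_mem_Ioo (hTE v' hv').1 (hTE v hv).2 (hTE v' hv').2 hx hx'
  have hnonneg : ∀ v ∈ T, 0 ≤ M v * linForm a b (W v) := fun v hv =>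
    mul_nonneg (by exact_mod_cast zero_le_one.trans (hTE v hv).1.one_le) (hTE v hv).2.le
  have hvolume := measure_mono (μ := volume) hshadow
  rw [measure_biUnion_finset hdisj fun v _ => measurableSet_Ioo] at hvolume
  simp only [shadow, Real.volume_Ioo, Real.volume_Icc, linForm_add_zsmul,
    add_sub_cancel_left] at hvolume
  rw [← ENNReal.ofReal_sum_of_nonneg hnonneg,
    ENNReal.ofReal_le_ofReal_iff (sub_nonneg.2 hlohi)] at hvolume
  refine le_of_eq_of_le ?_ hvolume
  rw [hT, Finset.sum_filter]
  refine Finset.sum_congr rfl fun v _ => ?_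
  split_ifs with h
  · rw [max_eq_left h.le]
  · rw [max_eq_right (not_lt.1 h), mul_zero]

lemma periodic_max_cos : Function.Periodic (fun x => max (Real.cos x) 0) (2 * Real.pi) :=
  fun x => by simp only [Real.cos_periodic x]

lemma integral_max_cos : ∫ x in (0 : ℝ)..2 * Real.pi, max (Real.cos x) 0 = 2 := by
  have hshift := periodic_max_cos.intervalIntegral_add_eq 0 (-(Real.pi / 2))
  have hint (a b : ℝ) : IntervalIntegrable (fun x => max (Real.cos x) 0) volume a b :=
    (Real.continuous_cos.max continuous_const).intervalIntegrable a b
  have hpos : ∫ x in -(Real.pi / 2)..Real.pi / 2, max (Real.cos x) 0 = 2 := by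
    rw [intervalIntegral.integral_congr (g := Real.cos), integral_cos, Real.sin_neg,
      Real.sin_pi_div_two]
    · norm_num
    · intro x hx
      rw [uIcc_of_le (by linarith [Real.pi_pos])] at hx
      exact max_eq_left (Real.cos_nonneg_of_mem_Icc hx)
  have hneg : ∫ x in Real.pi / 2..-(Real.pi / 2) + 2 * Real.pi, max (Real.cos x) 0 = 0 := by
    rw [intervalIntegral.integral_congr (g := fun _ => 0), intervalIntegral.integral_zero]
    intro x hx
    rw [uIcc_of_le (by linarith [Real.pi_pos])] at hx
    exact max_eq_right (Real.cos_nonpos_of_pi_div_two_le_of_le hx.1 (by linarith [hx.2]))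
  rw [zero_add] at hshift
  rw [hshift, ← intervalIntegral.integral_add_adjacent_intervals (hint _ (Real.pi / 2))
    (hint _ _), hpos, hneg, add_zero]

lemma continuous_max_linForm_cos_sin (w : ℤ × ℤ) :
    Continuous fun x => max (linForm (Real.cos x) (Real.sin x) w) 0 := by
  simp only [linForm_apply]; fun_prop

lemma integral_max_linForm_cos_sin (w : ℤ × ℤ) :
    ∫ x in (0 : ℝ)..2 * Real.pi, max (linForm (Real.cos x) (Real.sin x) w) 0 = 2 * len w := by
  let z : ℂ := ⟨w.1, w.2⟩
  have hz : ‖z‖ = len w := by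
    rw [Complex.norm_def, Complex.normSq_apply, len, dotForm_apply]; push_cast; rfl
  have hfst : (w.1 : ℝ) = len w * Real.cos z.arg := by rw [← hz, Complex.norm_mul_cos_arg]
  have hsnd : (w.2 : ℝ) = len w * Real.sin z.arg := by rw [← hz, Complex.norm_mul_sin_arg]
  have hpolar (x : ℝ) : max (linForm (Real.cos x) (Real.sin x) w) 0 =
      len w * max (Real.cos (x - z.arg)) 0 := by
    rw [mul_max_of_nonneg _ _ (len_nonneg w), mul_zero, Real.cos_sub, linForm_apply, hfst, hsnd]
    congr 1; ring
  have hshift := periodic_max_cos.intervalIntegral_add_eq (0 - z.arg) 0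
  rw [zero_add, integral_max_cos, ← add_sub_right_comm, zero_add] at hshift
  simp only [hpolar]
  rw [intervalIntegral.integral_const_mul,
    intervalIntegral.integral_comp_sub_right (fun x => max (Real.cos x) 0), hshift, mul_comm]

lemma abs_linForm_le (hab : a ^ 2 + b ^ 2 = 1) (p : ℤ × ℤ) : |linForm a b p| ≤ len p := by
  refine abs_le_of_sq_le_sq ?_ (len_nonneg p)
  rw [len_sq, linForm_apply, dotForm_apply]
  push_cast
  linear_combination ((p.1 : ℝ) ^ 2 + p.2 ^ 2) * hab + sq_nonneg (b * p.1 - a * p.2)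

/-- Cauchy's formula: the perimeter is the integral of the width over all directions. -/
lemma sum_mul_len_le_two_pi_mul (hr : 0 ≤ r) (hA : A ⊆ latticeDisc r)
    (hE : ∀ v ∈ S, IsHullEdge A v (W v) (M v)) :
    ∑ v ∈ S, M v * len (W v) ≤ 2 * Real.pi * r := by
  have hwidth (x : ℝ) :
      ∑ v ∈ S, M v * max (linForm (Real.cos x) (Real.sin x) (W v)) 0 ≤ r - -r :=
    sum_mul_max_linForm_le hE (neg_le_self hr) fun p hp => abs_le.1 <|
      (abs_linForm_le (Real.cos_sq_add_sin_sq x) p).trans (mem_latticeDisc.1 (hA hp))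
  have hcont (v : ℤ × ℤ) :
      Continuous fun x => M v * max (linForm (Real.cos x) (Real.sin x) (W v)) 0 :=
    continuous_const.mul (continuous_max_linForm_cos_sin (W v))
  have hint := intervalIntegral.integral_mono (μ := volume) Real.two_pi_pos.le
    ((continuous_finsetSum S fun v _ => hcont v).intervalIntegrable _ _)
    (continuous_const.intervalIntegrable _ _) hwidth
  rw [intervalIntegral.integral_finsetSum fun v _ => (hcont v).intervalIntegrable _ _] at hint
  simp only [intervalIntegral.integral_const_mul, integral_max_linForm_cos_sin,
    intervalIntegral.integral_const, smul_eq_mul, mul_left_comm _ (2 : ℝ), ← Finset.mul_sum]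
    at hint
  linarith

end Perimeter

section Chords

variable {c r : ℝ} {k m m' : ℤ} {p u v w : ℤ × ℤ}

/-- The half-length, multiplied by `len u`, of the chord of the disc of radius `r` cut out by the
line `detForm u = k`. On that line `dotForm u` runs over `[-halfChord r u k, halfChord r u k]`;
the value is `0` if the line misses the disc. -/
def halfChord (r : ℝ) (u : ℤ × ℤ) (k : ℤ) : ℝ := √((r * len u) ^ 2 - k ^ 2)

lemma abs_dotForm_le_halfChord (u : ℤ × ℤ) (hp : p ∈ latticeDisc r) :
    |(dotForm u p : ℝ)| ≤ halfChord r u (detForm u p) := by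
  refine Real.abs_le_sqrt (le_sub_iff_add_le'.2 ?_)
  rw [detForm_sq_add_dotForm_sq_real, mul_comm r]
  have := mem_latticeDisc.1 hp
  have := len_nonneg u
  have := len_nonneg p
  gcongr

lemma abs_detForm_le_mul_len (u : ℤ × ℤ) (hp : p ∈ latticeDisc r) :
    |(detForm u p : ℝ)| ≤ r * len u := by
  rw [mul_comm]
  exact (abs_detForm_le u p).trans
    (mul_le_mul_of_nonneg_left (mem_latticeDisc.1 hp) (len_nonneg u))

lemma mem_latticeDisc_of_abs_dotForm_le (hr : 0 ≤ r) (hu : u ≠ 0)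
    (hdet : |(detForm u p : ℝ)| ≤ r * len u)
    (hdot : |(dotForm u p : ℝ)| ≤ halfChord r u (detForm u p)) : p ∈ latticeDisc r := by
  have hu₁ := one_le_len hu
  have hdet_sq := sq_le_sq' (abs_le.1 hdet).1 (abs_le.1 hdet).2
  have hdot_sq := sq_le_sq' (abs_le.1 hdot).1 (abs_le.1 hdot).2
  rw [halfChord, Real.sq_sqrt (sub_nonneg.2 hdet_sq), le_sub_iff_add_le',
    detForm_sq_add_dotForm_sq_real] at hdot_sq
  rw [mem_latticeDisc]
  refine le_of_mul_le_mul_left (a := len u) ?_ (by positivity)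
  rw [mul_comm _ r]
  exact le_of_sq_le_sq hdot_sq (by positivity)

/-- On a lattice line the points are `len u` apart, so the last one inside the disc is near the
end of the chord. -/
lemma exists_mem_latticeDisc_detForm_eq (hr : 0 ≤ r) (hu : IsPrimitive u)
    (h : len u ^ 2 ≤ 2 * halfChord r u k) :
    ∃ q ∈ latticeDisc r, detForm u q = k ∧ halfChord r u k - len u ^ 2 < dotForm u q := by
  have hu₁ := one_le_len hu.ne_zero
  have hu₂ : 0 < len u ^ 2 := by positivity
  obtain ⟨q₀, hq₀⟩ := hu.exists_detForm_eq k
  set j := ⌊(halfChord r u k - dotForm u q₀) / len u ^ 2⌋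
  have hj := Int.floor_le ((halfChord r u k - dotForm u q₀) / len u ^ 2)
  have hj' := Int.lt_floor_add_one ((halfChord r u k - dotForm u q₀) / len u ^ 2)
  rw [le_div_iff₀ hu₂] at hj
  rw [div_lt_iff₀ hu₂] at hj'
  have hdet : detForm u (q₀ + j • u) = k := by
    rw [detForm_add_smul_self, hq₀]
  have hdot := dotForm_add_smul_self u q₀ j
  have hlower : halfChord r u k - len u ^ 2 < dotForm u (q₀ + j • u) := by linarith
  refine ⟨q₀ + j • u, mem_latticeDisc_of_abs_dotForm_le hr hu.ne_zero ?_ ?_, hdet, hlower⟩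
  · have hpos : 0 < (r * len u) ^ 2 - (k : ℝ) ^ 2 :=
      Real.sqrt_pos.1 (by rw [← halfChord]; linarith)
    rw [hdet]
    exact abs_le_of_sq_le_sq (by linarith) (by positivity)
  · rw [hdet, abs_le]
    constructor <;> linarith

namespace IsHullEdge

lemma halfChord_lt_abs_dotForm_of_notMem (h : IsHullEdge (latticeDisc r) v u m)
    (hk : v + k • u ∉ latticeDisc r) :
    halfChord r u (detForm u v) < |(dotForm u (v + k • u) : ℝ)| := by
  have hv := mem_latticeDisc.1 h.isFaceStart.mem
  contrapose! hk
  refine mem_latticeDisc_of_abs_dotForm_le ((len_nonneg v).trans hv) h.isPrimitive.ne_zero ?_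
    (by rwa [detForm_add_smul_self])
  rw [detForm_add_smul_self]
  exact abs_detForm_le_mul_len u h.isFaceStart.mem

/-- The edge misses the chord that contains it by less than one lattice step on either side. -/
lemma two_mul_halfChord_lt (h : IsHullEdge (latticeDisc r) v u m) :
    2 * halfChord r u (detForm u v) < (m + 2) * len u ^ 2 := by
  have hu : 0 < len u ^ 2 := by have := one_le_len h.isPrimitive.ne_zero; positivity
  have hbefore := h.halfChord_lt_abs_dotForm_of_notMem (k := -1) fun hmem => by
    have : (dotForm u v : ℝ) ≤ dotForm u (v + (-1 : ℤ) • u) :=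
      mod_cast h.isFaceStart.dotForm_le _ hmem (detForm_add_smul_self u v _)
    rw [dotForm_add_smul_self] at this
    push_cast at this
    linarith
  have hafter := h.halfChord_lt_abs_dotForm_of_notMem (k := m + 1) fun hmem => by
    have := h.le_of_mem _ hmem
    lia
  have hstart := abs_le.1 (abs_dotForm_le_halfChord u h.isFaceStart.mem)
  have hend := abs_le.1 (abs_dotForm_le_halfChord u h.end_mem)
  rw [detForm_add_smul_self] at hend
  rw [dotForm_add_smul_self] at hbefore hafter hend
  push_cast at hbefore hafter
  rcases lt_abs.1 hbefore with hbefore | hbefore <;>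
    rcases lt_abs.1 hafter with hafter | hafter <;> linarith

lemma detForm_next_pos {A : Finset (ℤ × ℤ)} {q : ℤ × ℤ} (h : IsHullEdge A v u m)
    (h' : IsHullEdge A (v + m • u) w m') (hq : q ∈ A) (hvq : detForm u v < detForm u q) :
    0 < detForm u w := by
  have hm' := h'.one_le
  have hnonneg : 0 ≤ detForm u w := by
    have := h.isFaceStart.detForm_le _ h'.end_mem
    rw [map_add, detForm_add_smul_self, map_zsmul, smul_eq_mul] at this
    nlinarith
  refine hnonneg.lt_of_ne fun hzero => ?_
  rcases h.isPrimitive.eq_or_eq_neg h'.isPrimitive hzero.symm with rfl | rfl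
  · have := h.le_of_mem (m + m') (by rw [add_smul, ← add_assoc]; exact h'.end_mem)
    lia
  · have := h'.isFaceStart.detForm_le q hq
    rw [detForm_neg_left, detForm_neg_left, detForm_add_smul_self] at this
    lia

/-- The next line parallel to an edge has lattice points far ahead of the edge, unless its chord
is short. The next edge has to pass to the right of them, which makes it long. -/
lemma halfChord_succ_lt (hr : 0 ≤ r) (h : IsHullEdge (latticeDisc r) v u m)
    (h' : IsHullEdge (latticeDisc r) (v + m • u) w m') :
    halfChord r u (detForm u v + 1) < len u * len w + (m / 2 + 2) * len u ^ 2 := by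
  have hu : 0 < len u ^ 2 := by have := one_le_len h.isPrimitive.ne_zero; positivity
  have hm : (1 : ℝ) ≤ m := mod_cast h.one_le
  have hlens : 0 ≤ len u * len w := mul_nonneg (len_nonneg u) (len_nonneg w)
  by_cases hlong : len u ^ 2 ≤ 2 * halfChord r u (detForm u v + 1)
  swap; · nlinarith
  obtain ⟨q, hq, hdet, hdot⟩ := exists_mem_latticeDisc_detForm_eq hr h.isPrimitive hlong
  set b := v + m • u
  have hub : detForm u b = detForm u v := detForm_add_smul_self u v m
  have huw := h.detForm_next_pos h' hq (by lia)
  have hb := (abs_le.1 (abs_dotForm_le_halfChord u h.end_mem)).2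
  rw [hub] at hb
  have hchord := h.two_mul_halfChord_lt
  suffices hqb : (dotForm u (q - b) : ℝ) ≤ len u * len w by
    rw [map_sub] at hqb
    push_cast at hqb
    linarith
  rcases le_or_gt (dotForm u (q - b)) 0 with hneg | hpos
  · exact (Int.cast_nonpos.2 hneg).trans hlens
  have hwq : 0 ≤ detForm w (q - b) := by
    rw [map_sub]; exact sub_nonneg.2 (h'.isFaceStart.detForm_le q hq)
  have hle : dotForm u (q - b) ≤ dotForm u w := by
    have := mul_nonneg (dotForm_self_nonneg u) hwq
    rw [dotForm_self_mul_detForm, map_sub (detForm u), hdet, hub, add_sub_cancel_left,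
      mul_one] at this
    nlinarith
  exact (Int.cast_le.2 hle).trans ((le_abs_self _).trans (abs_dotForm_le u w))

lemma detForm_nonpos (hr : 0 ≤ r) (h : IsHullEdge (latticeDisc r) v u m) : detForm u v ≤ 0 := by
  have := h.isFaceStart.detForm_le 0 (mem_latticeDisc.2 (by simpa [len] using hr))
  rwa [map_zero] at this

end IsHullEdge

/-- Moving a short chord of the disc by one lattice line towards the center makes it longer by a
definite factor. -/
lemma mul_le_halfChord_succ (hc : 10 ≤ c) (hu : u ≠ 0) (hl : len u ≤ 0.2 * c) (hk : k ≤ 0)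
    (hkr : |(k : ℝ)| ≤ c ^ 3 * len u) (h : halfChord (c ^ 3) u k ≤ c * len u) :
    3.155 * c * len u ≤ halfChord (c ^ 3) u (k + 1) := by
  have hl₁ := one_le_len hu
  have hk₀ : (k : ℝ) ≤ 0 := mod_cast hk
  have hchord : (c ^ 3 * len u) ^ 2 - (k : ℝ) ^ 2 ≤ (c * len u) ^ 2 :=
    (Real.sqrt_le_left (by positivity)).1 h
  refine Real.le_sqrt_of_sq_le ?_
  push_cast
  rw [abs_of_nonpos hk₀] at hkr
  generalize len u = l at *
  generalize (k : ℝ) = K at *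
  have : 0 ≤ l := by linarith
  have hc₂ : 10 * c ^ 2 ≤ c ^ 3 := by nlinarith [sq_nonneg c]
  have hc₃ : 1000 ≤ c ^ 3 := by nlinarith
  have hK : l * (c ^ 3 - 1) ≤ -K := by
    refine le_of_sq_le_sq ?_ (by linarith)
    nlinarith [mul_nonneg (sq_nonneg l) (by linarith : 0 ≤ 2 * c ^ 3 - 1 - c ^ 2)]
  have hK_sq : K ^ 2 ≤ (c ^ 3 * l) ^ 2 := by nlinarith
  have hlc : c ^ 2 * l * l ≤ c ^ 2 * l * (0.2 * c) := by gcongr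
  have hlc₃ : 1000 * l ≤ c ^ 3 * l := by gcongr
  calc (3.155 * c * l) ^ 2 = 3.155 ^ 2 * (c ^ 2 * l * l) := by ring
    _ ≤ 2 * (l * (c ^ 3 - 1)) - 1 := by linarith
    _ ≤ -2 * K - 1 := by linarith
    _ ≤ (c ^ 3 * l) ^ 2 - (K + 1) ^ 2 := by linarith

/-- The charging inequality: a short edge is either long as a multiple of its direction, or
followed by an edge with a long direction. -/
lemma IsHullEdge.le_excess_of_len_le (hc : 10 ≤ c) (h : IsHullEdge (latticeDisc (c ^ 3)) v u m)
    (h' : IsHullEdge (latticeDisc (c ^ 3)) (v + m • u) w m') (hl : len u ≤ 0.2 * c) :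
    0.95 * c ≤ (m - 1) * len u + max (len w - 1.7 * c) 0 := by
  have hr : 0 ≤ c ^ 3 := by positivity
  have hl₁ := one_le_len h.isPrimitive.ne_zero
  have hm : (1 : ℝ) ≤ m := mod_cast h.one_le
  by_contra! hsmall
  have hw : len w - 1.7 * c < 0.95 * c - (m - 1) * len u := by
    linarith [le_max_left (len w - 1.7 * c) 0]
  have hml : (m - 1) * len u < 0.95 * c := by linarith [le_max_right (len w - 1.7 * c) 0]
  have hshort : halfChord (c ^ 3) u (detForm u v) ≤ c * len u := by
    nlinarith [h.two_mul_halfChord_lt]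
  have hlower := mul_le_halfChord_succ hc h.isPrimitive.ne_zero hl (h.detForm_nonpos hr)
    (abs_detForm_le_mul_len u h.isFaceStart.mem) hshort
  have hupper := h.halfChord_succ_lt hr h'
  have : 3.155 * c < len w + (m / 2 + 2) * len u :=
    lt_of_mul_lt_mul_left (a := len u) (by linarith) (by linarith)
  linarith [le_mul_of_one_le_left (len_nonneg u) hm]

end Chords

section UpperBound

variable {ι : Type*} {S : Finset ι} {W : ι → ℤ × ℤ} {c δ s L r : ℝ}

/-- Distinct primitive directions waste the least when all the short ones are used; each unused
direction of length at most `s` costs at least `L - s ≥ δ`. -/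
lemma sum_max_sub_len_add_le (hδ : 0 ≤ δ) (hsL : s + δ ≤ L) (hW : ∀ v ∈ S, IsPrimitive (W v))
    (hinj : InjOn W S) :
    ∑ v ∈ S, max (L - len (W v)) 0 + δ * (primDisc s).card ≤
      ∑ w ∈ primDisc L, (L - len w) + δ * (S.filter fun v => len (W v) ≤ s).card := by
  let gain (w : ℤ × ℤ) : ℝ := max (L - len w) 0 - if len w ≤ s then δ else 0
  have hgain_nonneg (w : ℤ × ℤ) : 0 ≤ gain w := by
    refine sub_nonneg.2 ?_
    split_ifs
    · exact le_max_of_le_left (by linarith)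
    · exact le_max_right _ _
  have hgain_zero {w : ℤ × ℤ} (hw : gain w ≠ 0) : len w ≤ L := by
    contrapose! hw
    simp only [gain]
    rw [max_eq_right (by linarith), if_neg (by linarith), sub_zero]
  have hle : ∑ v ∈ S, gain (W v) ≤ ∑ w ∈ primDisc L, gain w := by
    rw [← Finset.sum_image hinj, ← Finset.sum_filter_of_ne fun w _ => hgain_zero]
    refine Finset.sum_le_sum_of_subset_of_nonneg (fun w hw => ?_) fun w _ _ => hgain_nonneg w
    obtain ⟨hw, hwL⟩ := Finset.mem_filter.1 hw
    obtain ⟨v, hv, rfl⟩ := Finset.mem_image.1 hw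
    exact mem_primDisc.2 ⟨hW v hv, hwL⟩
  have hshort : (primDisc L).filter (len · ≤ s) = primDisc s := by
    ext w
    simp only [Finset.mem_filter, mem_primDisc]
    exact ⟨fun h => ⟨h.1.1, h.2⟩, fun h => ⟨⟨h.1, by linarith⟩, h.2⟩⟩
  have hmax : ∑ w ∈ primDisc L, max (L - len w) 0 = ∑ w ∈ primDisc L, (L - len w) :=
    Finset.sum_congr rfl fun w hw => max_eq_left (sub_nonneg.2 (mem_primDisc.1 hw).2)
  simp only [gain, Finset.sum_sub_distrib, ← Finset.sum_filter, hshort] at hle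
  rw [hmax] at hle
  simp only [Finset.sum_const, nsmul_eq_mul] at hle
  linarith

/-- A charging argument: every element satisfying `P` pays from its own account and from that of
its successor. -/
lemma card_filter_mul_le_sum {P : ι → Prop} [DecidablePred P] {N : ι → ι} {f g : ι → ℝ}
    (hN : MapsTo N S S) (hinj : InjOn N S) (hf : ∀ v ∈ S, 0 ≤ f v) (hg : ∀ v ∈ S, 0 ≤ g v)
    (h : ∀ v ∈ S, P v → δ ≤ f v + g (N v)) :
    δ * (S.filter P).card ≤ ∑ v ∈ S, (f v + g v) := by
  classical
  calc δ * (S.filter P).card = ∑ _v ∈ S.filter P, δ := by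
        rw [Finset.sum_const, nsmul_eq_mul, mul_comm]
    _ ≤ ∑ v ∈ S.filter P, (f v + g (N v)) := Finset.sum_le_sum fun v hv =>
        h v (Finset.mem_filter.1 hv).1 (Finset.mem_filter.1 hv).2
    _ ≤ ∑ v ∈ S, (f v + g (N v)) :=
        Finset.sum_le_sum_of_subset_of_nonneg (Finset.filter_subset _ _) fun v hv _ =>
          add_nonneg (hf v hv) (hg _ (hN hv))
    _ = ∑ v ∈ S, f v + ∑ v ∈ S.image N, g v := by
        rw [Finset.sum_add_distrib, Finset.sum_image hinj]
    _ ≤ ∑ v ∈ S, (f v + g v) := by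
        rw [Finset.sum_add_distrib]
        exact add_le_add le_rfl (Finset.sum_le_sum_of_subset_of_nonneg
          (Finset.image_subset_iff.2 hN) fun v hv _ => hg v hv)

lemma exists_mem_latticeDisc_ne (hr : 1 ≤ r) (v : ℤ × ℤ) : ∃ q ∈ latticeDisc r, q ≠ v := by
  by_cases hv : v = 0
  · refine ⟨(1, 0), mem_latticeDisc.2 ?_, by simp [hv]⟩
    simpa [len, dotForm_apply] using hr
  · refine ⟨0, mem_latticeDisc.2 ?_, Ne.symm hv⟩
    simpa [len] using zero_le_one.trans hr

lemma card_vertices_mul_le (hc : 10 ≤ c) :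
    (vertices (latticeDisc (c ^ 3))).card * (1.7 * c) ≤ 2 * Real.pi * c ^ 3 +
      ∑ w ∈ primDisc (1.7 * c), (1.7 * c - len w) - 0.95 * c * (primDisc (0.2 * c)).card := by
  have hr : 1 ≤ c ^ 3 := one_le_pow₀ (by linarith)
  set V := vertices (latticeDisc (c ^ 3))
  have hedge : ∀ v ∈ V, ∃ w m, IsHullEdge (latticeDisc (c ^ 3)) v w m := fun v hv =>
    (mem_vertices.1 hv).exists_isHullEdge (exists_mem_latticeDisc_ne hr v)
  choose! W M hE using hedge
  have hnext : MapsTo (fun v => v + M v • W v) V V := fun v hv =>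
    mem_vertices.2 (hE v hv).isVertex_end
  have hnext_inj : InjOn (fun v => v + M v • W v) V := fun v hv v' hv' =>
    (hE v hv).start_eq_of_end_eq (hE v' hv')
  have hW_inj : InjOn W V := fun v hv v' hv' h =>
    (hE v hv).start_eq_of_direction_eq (h ▸ hE v' hv')
  have hperimeter := sum_mul_len_le_two_pi_mul (zero_le_one.trans hr) subset_rfl hE
  have hwaste := sum_max_sub_len_add_le (L := 1.7 * c) (s := 0.2 * c) (δ := 0.95 * c)
    (by linarith) (by linarith) (fun v hv => (hE v hv).isPrimitive) hW_inj
  have hexcess := card_filter_mul_le_sum hnext hnext_inj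
    (fun v hv => mul_nonneg (sub_nonneg.2 (by exact_mod_cast (hE v hv).one_le)) (len_nonneg (W v)))
    (fun v _ => le_max_right (len (W v) - 1.7 * c) 0)
    fun v hv hshort => (hE v hv).le_excess_of_len_le hc (hE _ (hnext hv)) hshort
  have hsplit (v : ℤ × ℤ) : 1.7 * c = M v * len (W v) + max (1.7 * c - len (W v)) 0 -
      ((M v - 1) * len (W v) + max (len (W v) - 1.7 * c) 0) := by
    rcases le_total (len (W v)) (1.7 * c) with h | h
    · rw [max_eq_left (by linarith), max_eq_right (by linarith)]; ring
    · rw [max_eq_right (by linarith), max_eq_left (by linarith)]; ring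
  have hsum : V.card * (1.7 * c) = ∑ v ∈ V, M v * len (W v) +
      ∑ v ∈ V, max (1.7 * c - len (W v)) 0 -
        ∑ v ∈ V, ((M v - 1) * len (W v) + max (len (W v) - 1.7 * c) 0) := by
    rw [← Finset.sum_add_distrib, ← Finset.sum_sub_distrib, ← nsmul_eq_mul, ← Finset.sum_const]
    exact Finset.sum_congr rfl fun v _ => hsplit v
  linarith

lemma eventually_card_vertices_lt :
    ∀ᶠ c : ℝ in atTop, ((vertices (latticeDisc (c ^ 3))).card : ℝ) < 5.5 * c ^ 2 := by
  have hlim := ((tendsto_sum_primDisc_sub_len (a := 1.7) (by norm_num)).const_add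
    (2 * Real.pi)).sub ((tendsto_card_primDisc_mul (a := 0.2) (by norm_num)).const_mul 0.95)
  have hvalue : 2 * Real.pi + 2 / Real.pi * 1.7 ^ 3 - 0.95 * (6 / Real.pi * 0.2 ^ 2)
      < 5.5 * 1.7 := by
    have hinv : 2 / Real.pi ≤ 0.63664 := by
      rw [div_le_iff₀ Real.pi_pos]; linarith [Real.pi_gt_d4]
    have hthree : 6 / Real.pi = 3 * (2 / Real.pi) := by ring
    rw [hthree]
    linarith [Real.pi_lt_d4]
  filter_upwards [hlim.eventually_lt_const hvalue, eventually_ge_atTop 10] with c hlt hc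
  have hc₀ : 0 < c := by linarith
  have hle := card_vertices_mul_le hc
  have hscale := mul_lt_mul_of_pos_right hlt (pow_pos hc₀ 3)
  refine lt_of_mul_lt_mul_right (a := 1.7 * c) ?_ (by positivity)
  calc _ ≤ _ := hle
    _ = _ := by field_simp
    _ < _ := hscale
    _ = _ := by ring

end UpperBound

section LowerBound

variable {c r : ℝ} {k : ℤ} {v w w' : ℤ × ℤ}

lemma IsFaceStart.detForm_le_of_len_sq_le (hr : 0 ≤ r) (hw : IsPrimitive w)
    (h : IsFaceStart (latticeDisc r) w v) (hk : len w ^ 2 ≤ 2 * halfChord r w k) :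
    detForm w v ≤ k := by
  obtain ⟨q, hq, rfl, -⟩ := exists_mem_latticeDisc_detForm_eq hr hw hk
  exact h.detForm_le q hq

lemma IsFaceStart.sub_one_le_neg_detForm (hr : 0 < r) (hw : IsPrimitive w) (hwr : len w ≤ 2 * r)
    (h : IsFaceStart (latticeDisc r) w v) :
    r * len w - len w ^ 3 / (4 * r) - 1 ≤ -detForm w v := by
  set B := r * len w - len w ^ 3 / (4 * r) with hB
  have hl := len_nonneg w
  have hB_nonneg : 0 ≤ B := by
    rw [hB, sub_nonneg, div_le_iff₀ (by positivity)]
    nlinarith [mul_le_mul hwr hwr hl (by positivity)]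
  have hchord : len w ^ 2 ≤ 2 * halfChord r w (-⌊B⌋) := by
    suffices len w ^ 2 / 2 ≤ halfChord r w (-⌊B⌋) by linarith
    refine Real.le_sqrt_of_sq_le (le_sub_comm.1 ?_)
    push_cast
    rw [neg_sq]
    calc (⌊B⌋ : ℝ) ^ 2 ≤ B ^ 2 := by
          have : (0 : ℝ) ≤ ⌊B⌋ := mod_cast Int.floor_nonneg.2 hB_nonneg
          gcongr
          exact Int.floor_le B
      _ = (r * len w) ^ 2 - len w ^ 4 / 2 + len w ^ 4 * len w ^ 2 / (16 * r ^ 2) := by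
          rw [hB]; field_simp; ring
      _ ≤ (r * len w) ^ 2 - len w ^ 4 / 2 + len w ^ 4 * (2 * r) ^ 2 / (16 * r ^ 2) := by gcongr
      _ = (r * len w) ^ 2 - (len w ^ 2 / 2) ^ 2 := by field_simp; ring
  have hle : (detForm w v : ℝ) ≤ -⌊B⌋ := mod_cast h.detForm_le_of_len_sq_le hr.le hw hchord
  linarith [Int.lt_floor_add_one B]

lemma IsFaceStart.len_mul_le_neg_detForm (hc : 1 ≤ c) (hw : IsPrimitive w) (hcw : c ≤ len w)
    (hwc : len w ≤ 2 * c) (h : IsFaceStart (latticeDisc (c ^ 3)) w v) :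
    len w * (c ^ 3 - 3 / (2 * c)) ≤ -detForm w v := by
  have hc₃ : c ≤ c ^ 3 := le_self_pow₀ hc (by norm_num)
  refine le_trans ?_ (h.sub_one_le_neg_detForm (by positivity) hw (by linarith))
  rw [← sub_nonneg]
  have hcubic : 0 ≤ (2 * c - len w) * (len w ^ 2 + 2 * c * len w - 2 * c ^ 2) :=
    mul_nonneg (by linarith) (by nlinarith)
  calc (0 : ℝ) ≤ (2 * c - len w) * (len w ^ 2 + 2 * c * len w - 2 * c ^ 2) / (4 * c ^ 3) := by
        positivity
    _ = _ := by field_simp; ring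

lemma pow_three_sub_div_pos (hc : 2 ≤ c) : 0 < c ^ 3 - 3 / (2 * c) := by
  have hfrac : 3 / (2 * c) ≤ 1 := by rw [div_le_one (by linarith)]; linarith
  have hc₃ : c ≤ c ^ 3 := le_self_pow₀ (by linarith) (by norm_num)
  linarith

lemma pow_ten_le_mul_sq (hc : 4 ≤ c) :
    c ^ 10 ≤ (49 / 16 + c ^ 4) * (c ^ 3 - 3 / (2 * c)) ^ 2 := by
  have hc₄ : 147 ≤ c ^ 4 := by
    calc (147 : ℝ) ≤ 4 ^ 4 := by norm_num
      _ ≤ c ^ 4 := by gcongr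
  calc c ^ 10 ≤ c ^ 10 + c ^ 2 * (c ^ 4 - 147) / 16 := by
        have := mul_nonneg (sq_nonneg c) (sub_nonneg.2 hc₄)
        linarith
    _ = (49 / 16 + c ^ 4) * (c ^ 6 - 3 * c ^ 2) := by ring
    _ ≤ (49 / 16 + c ^ 4) * (c ^ 6 - 3 * c ^ 2 + (3 / (2 * c)) ^ 2) := by
        gcongr
        exact le_add_of_nonneg_right (sq_nonneg _)
    _ = (49 / 16 + c ^ 4) * (c ^ 3 - 3 / (2 * c)) ^ 2 := by field_simp; ring

lemma IsFaceStart.detForm_neg_of_le_len (hc : 2 ≤ c) (hw : IsPrimitive w) (hcw : c ≤ len w)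
    (hwc : len w ≤ 2 * c) (h : IsFaceStart (latticeDisc (c ^ 3)) w v) : detForm w v < 0 := by
  have hle := h.len_mul_le_neg_detForm (by linarith) hw hcw hwc
  have : 0 < len w * (c ^ 3 - 3 / (2 * c)) := mul_pos (by linarith) (pow_three_sub_div_pos hc)
  exact_mod_cast (by linarith : (detForm w v : ℝ) < 0)

lemma IsFaceStart.abs_dotForm_div_detForm_le (hc : 4 ≤ c) (hw : IsPrimitive w)
    (hcw : c ≤ len w) (hwc : len w ≤ 2 * c) (h : IsFaceStart (latticeDisc (c ^ 3)) w v) :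
    |4 * c ^ 2 * ((dotForm w v : ℝ) / detForm w v)| ≤ 7 := by
  have hneg : (detForm w v : ℝ) < 0 :=
    mod_cast h.detForm_neg_of_le_len (by linarith) hw hcw hwc
  have hdisc : (detForm w v : ℝ) ^ 2 + (dotForm w v : ℝ) ^ 2 ≤ (len w * c ^ 3) ^ 2 := by
    rw [detForm_sq_add_dotForm_sq_real]
    have := len_nonneg w
    have := len_nonneg v
    gcongr
    exact mem_latticeDisc.1 h.mem
  have hdet_sq : (len w * (c ^ 3 - 3 / (2 * c))) ^ 2 ≤ (detForm w v : ℝ) ^ 2 := by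
    rw [← neg_sq (detForm w v : ℝ)]
    exact pow_le_pow_left₀
      (mul_nonneg (len_nonneg w) (pow_three_sub_div_pos (by linarith)).le)
      (h.len_mul_le_neg_detForm (by linarith) hw hcw hwc) 2
  have hsum : c ^ 4 * ((detForm w v : ℝ) ^ 2 + (dotForm w v : ℝ) ^ 2) ≤
      (49 / 16 + c ^ 4) * (detForm w v : ℝ) ^ 2 := by
    calc c ^ 4 * ((detForm w v : ℝ) ^ 2 + (dotForm w v : ℝ) ^ 2)
        ≤ c ^ 4 * (len w * c ^ 3) ^ 2 := by gcongr
      _ = len w ^ 2 * c ^ 10 := by ring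
      _ ≤ len w ^ 2 * ((49 / 16 + c ^ 4) * (c ^ 3 - 3 / (2 * c)) ^ 2) := by
          gcongr
          exact pow_ten_le_mul_sq hc
      _ = (49 / 16 + c ^ 4) * (len w * (c ^ 3 - 3 / (2 * c))) ^ 2 := by ring
      _ ≤ _ := by gcongr
  rw [← mul_div_assoc, abs_div, div_le_iff₀ (abs_pos.2 hneg.ne), abs_of_neg hneg]
  exact abs_le_of_sq_le_sq (by linarith) (by linarith)

/-- The cotangents of the angles which `v` forms with two nonparallel lattice directions are well
separated. -/
lemma one_le_mul_abs_sub_dotForm_div_detForm (hw : detForm w v ≠ 0) (hw' : detForm w' v ≠ 0)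
    (h : detForm w w' ≠ 0) :
    1 ≤ len w * len w' * |(dotForm w v : ℝ) / detForm w v - dotForm w' v / detForm w' v| := by
  have hdet : (detForm w v : ℝ) ≠ 0 := mod_cast hw
  have hdet' : (detForm w' v : ℝ) ≠ 0 := mod_cast hw'
  have hpos : 0 < |(detForm w v : ℝ) * detForm w' v| := abs_pos.2 (mul_ne_zero hdet hdet')
  have hnum : (dotForm w v : ℝ) * detForm w' v - detForm w v * dotForm w' v =
      -(len v ^ 2 * detForm w w') := by
    have := dotForm_self_mul_detForm v w w'
    rw [detForm_swap w v, detForm_swap w' v, dotForm_comm v w, dotForm_comm v w'] at this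
    have : (dotForm v v : ℝ) * detForm w w' = -(dotForm w v * detForm w' v) +
      detForm w v * dotForm w' v := mod_cast (by linarith)
    rw [len_sq, this]
    ring
  rw [div_sub_div _ _ hdet hdet', hnum, abs_div, abs_neg, ← mul_div_assoc, one_le_div hpos,
    abs_mul, abs_mul]
  calc |(detForm w v : ℝ)| * |(detForm w' v : ℝ)|
      ≤ (len w * len v) * (len w' * len v) := by
        have := len_nonneg w
        have := len_nonneg v
        gcongr <;> exact abs_detForm_le _ _
    _ = len w * len w' * (len v ^ 2 * 1) := by ring
    _ ≤ len w * len w' * (|len v ^ 2| * |(detForm w w' : ℝ)|) := by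
        have hone : (1 : ℝ) ≤ |(detForm w w' : ℝ)| := mod_cast Int.one_le_abs h
        have := len_nonneg w
        have := len_nonneg w'
        gcongr
        exact le_abs_self _

lemma detForm_ne_zero_of_neg_of_neg (hw : IsPrimitive w) (hw' : IsPrimitive w') (hne : w ≠ w')
    (hv : detForm w v < 0) (hv' : detForm w' v < 0) : detForm w w' ≠ 0 := by
  intro h
  rcases hw.eq_or_eq_neg hw' h with rfl | rfl
  · exact hne rfl
  · rw [detForm_neg_left] at hv'
    lia

lemma card_le_of_forall_isFaceStart (hc : 4 ≤ c) {s : Finset (ℤ × ℤ)}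
    (hs : s ⊆ primDisc (2 * c) \ primDisc c)
    (h : ∀ w ∈ s, IsFaceStart (latticeDisc (c ^ 3)) w v) : s.card ≤ 15 := by
  have hmem : ∀ w ∈ s, IsPrimitive w ∧ c ≤ len w ∧ len w ≤ 2 * c := fun w hw => by
    obtain ⟨hw₂, hw₁⟩ := Finset.mem_sdiff.1 (hs hw)
    obtain ⟨hprim, hle⟩ := mem_primDisc.1 hw₂
    exact ⟨hprim, le_of_not_ge fun hlt => hw₁ (mem_primDisc.2 ⟨hprim, hlt⟩), hle⟩
  let bin (w : ℤ × ℤ) : ℤ := ⌊4 * c ^ 2 * ((dotForm w v : ℝ) / detForm w v)⌋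
  have hneg : ∀ w ∈ s, detForm w v < 0 := fun w hw =>
    (h w hw).detForm_neg_of_le_len (by linarith) (hmem w hw).1 (hmem w hw).2.1 (hmem w hw).2.2
  have hbin : MapsTo bin s (Finset.Icc (-7) 7 : Finset ℤ) := fun w hw => by
    obtain ⟨hprim, hcw, hwc⟩ := hmem w hw
    obtain ⟨hge, hle⟩ := abs_le.1 ((h w hw).abs_dotForm_div_detForm_le hc hprim hcw hwc)
    refine Finset.mem_coe.2 (Finset.mem_Icc.2 ⟨Int.le_floor.2 (by exact_mod_cast hge), ?_⟩)
    exact Int.cast_le.1 ((Int.floor_le _).trans (hle.trans_eq (by norm_num)))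
  have hinj : InjOn bin s := fun w hw w' hw' heq => by
    obtain ⟨hprim, -, hwc⟩ := hmem w hw
    obtain ⟨hprim', -, hwc'⟩ := hmem w' hw'
    by_contra hne
    have hlt := Int.abs_sub_lt_one_of_floor_eq_floor heq
    have hsep := one_le_mul_abs_sub_dotForm_div_detForm (hneg w hw).ne (hneg w' hw').ne
      (detForm_ne_zero_of_neg_of_neg hprim hprim' hne (hneg w hw) (hneg w' hw'))
    rw [← mul_sub, abs_mul, abs_of_nonneg (by positivity)] at hlt
    have hlens : len w * len w' ≤ 2 * c * (2 * c) := by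
      have := len_nonneg w
      have := len_nonneg w'
      gcongr
    linarith [mul_le_mul_of_nonneg_right hlens (abs_nonneg
      ((dotForm w v : ℝ) / detForm w v - dotForm w' v / detForm w' v))]
  simpa using Finset.card_le_card_of_injOn bin hbin hinj

lemma card_primDisc_sub_le (hc : 4 ≤ c) :
    ((primDisc (2 * c)).card : ℝ) - (primDisc c).card ≤
      15 * (vertices (latticeDisc (c ^ 3))).card := by
  have hzero : (0 : ℤ × ℤ) ∈ latticeDisc (c ^ 3) :=
    mem_latticeDisc.2 (by simpa [len] using pow_nonneg (by linarith) 3)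
  choose start hstart using exists_isFaceStart ⟨0, hzero⟩
  have hmaps : ∀ w ∈ primDisc (2 * c) \ primDisc c, start w ∈ vertices (latticeDisc (c ^ 3)) :=
    fun w hw => mem_vertices.2 ((hstart w).isVertex
      (mem_primDisc.1 (Finset.mem_sdiff.1 hw).1).1.ne_zero)
  have hcard := Finset.card_le_mul_card_image_of_maps_to hmaps 15 fun v _ =>
    card_le_of_forall_isFaceStart hc (Finset.filter_subset _ _) fun w hw =>
      (Finset.mem_filter.1 hw).2 ▸ hstart w
  rw [Finset.card_sdiff_of_subset (primDisc_mono (by linarith)), Nat.sub_le_iff_le_add] at hcard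
  exact sub_le_iff_le_add.2 (mod_cast hcard)

lemma eventually_lt_card_vertices :
    ∀ᶠ c : ℝ in atTop, 0.3 * c ^ 2 < ((vertices (latticeDisc (c ^ 3))).card : ℝ) := by
  have hlim := (tendsto_card_primDisc_mul (a := 2) (by norm_num)).sub tendsto_card_primDisc
  have hvalue : 15 * 0.3 < 6 / Real.pi * 2 ^ 2 - 6 / Real.pi := by
    have : 6 / Real.pi * 2 ^ 2 - 6 / Real.pi = 18 / Real.pi := by ring
    rw [this, lt_div_iff₀ Real.pi_pos]
    linarith [Real.pi_lt_d2]
  filter_upwards [hlim.eventually_const_lt hvalue, eventually_ge_atTop 4] with c hlt hc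
  rw [← sub_div, lt_div_iff₀ (by positivity)] at hlt
  linarith [card_primDisc_sub_le hc]

end LowerBound

/-- Balog–Bárány: for all sufficiently large `r`, the convex hull of the integer points in
the disc of radius `r` has between `0.3 r^{2/3}` and `5.5 r^{2/3}` vertices. -/
theorem vertices_of_integer_hull_of_disc :
    ∃ R : ℝ, ∀ r : ℝ, R ≤ r →
      0.3 * r ^ ((2 : ℝ) / 3) <
        (numVertices 2 (integerHull 2 (Metric.closedBall (0 : E 2) r)) : ℝ) ∧
      (numVertices 2 (integerHull 2 (Metric.closedBall (0 : E 2) r)) : ℝ) <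
        5.5 * r ^ ((2 : ℝ) / 3) := by
  have hroot : Tendsto (fun r : ℝ => r ^ ((1 : ℝ) / 3)) atTop atTop :=
    tendsto_rpow_atTop (by norm_num)
  obtain ⟨R, hR⟩ := eventually_atTop.1 ((hroot.eventually
    (eventually_lt_card_vertices.and eventually_card_vertices_lt)).and (eventually_ge_atTop 0))
  refine ⟨R, fun r hr => ?_⟩
  obtain ⟨hbounds, hr₀⟩ := hR r hr
  have hroot_cube : (r ^ ((1 : ℝ) / 3)) ^ 3 = r := by
    rw [← Real.rpow_natCast, ← Real.rpow_mul hr₀]; norm_num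
  have hroot_sq : (r ^ ((1 : ℝ) / 3)) ^ 2 = r ^ ((2 : ℝ) / 3) := by
    rw [← Real.rpow_natCast, ← Real.rpow_mul hr₀]; norm_num
  rw [hroot_cube, hroot_sq] at hbounds
  rwa [numVertices_integerHull_closedBall]
end
end
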